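/- Let ℓ be a fixed nonnegative integer. Suppose K_n ≥ 2 and P_n ≥ σ·n for some constant σ > 0 for all sufficiently large n, K_n/P_n = o(1), and p_e = (ln n + ℓ·ln ln n + β_{ℓ,n})/n with β_{ℓ,n} = o(ln n) and lim_{n→∞} β_{ℓ,n} = +∞. Fix ε ∈ (0,1), a constant λ ∈ (0,1/2) satisfying max(2λσ, λ·(e²/σ)^{λ/(1−2λ)}) < 1, and a constant μ ∈ (0,1/2) satisfying max(2·(√μ·(e/μ)^μ)^σ, √μ·(e/μ)^μ) < 1. Then P[(κ = ℓ) ∩ (δ > ℓ) ∩ (𝓔(J))^c] → 0 as n → ∞, where κ is the vertex connectivity and δ the minimum degree of 𝔾_on(n,K_n,P_n,p_n). -/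

import Mathlib

open MeasureTheory Filter Asymptotics
open scoped ENNReal

noncomputable section

/-- Key rings: `K`-element subsets of a key pool of size `P`. -/
abbrev KeyRing (P K : ℕ) : Type := {s : Finset (Fin P) // s.card = K}

instance (P K : ℕ) : MeasurableSpace (KeyRing P K) := ⊤

/-- The uniform probability measure on key rings. -/
def uniformKeyMeasure (P K : ℕ) : Measure (KeyRing P K) :=
  (Fintype.card (KeyRing P K) : ℝ≥0∞)⁻¹ • (Measure.count : Measure (KeyRing P K))

/-- The Bernoulli measure with parameter `p` on `Bool`. -/
def bern (p : ℝ) : Measure Bool :=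
  ENNReal.ofReal p • Measure.dirac true + ENNReal.ofReal (1 - p) • Measure.dirac false

/-- Sample space underlying `𝔾_on(n, K, P, p)`: independent key rings for the `n`
nodes together with independent on/off channel states for each pair of nodes. -/
abbrev GonSpace (n K P : ℕ) : Type :=
  (Fin n → KeyRing P K) × (Sym2 (Fin n) → Bool)

/-- The probability measure of the model `𝔾_on(n, K, P, p)`: the key rings of the
`n` nodes are independent and uniform, and the channels are independent
Bernoulli(`p`) variables, independent of the key rings. -/
def gonMeasure (n K P : ℕ) (p : ℝ) : Measure (GonSpace n K P) :=
  (Measure.pi fun _ : Fin n => uniformKeyMeasure P K).prod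
    (Measure.pi fun _ : Sym2 (Fin n) => bern p)

/-- The random graph `𝔾_on`: an edge is present iff the key rings intersect and the
channel between the two nodes is on. -/
def gonGraph {n K P : ℕ} (ω : GonSpace n K P) : SimpleGraph (Fin n) where
  Adj i j := i ≠ j ∧ ((ω.1 i).1 ∩ (ω.1 j).1).Nonempty ∧ ω.2 s(i, j) = true
  symm := by
    refine ⟨?_⟩
    rintro i j ⟨h1, h2, h3⟩
    exact ⟨h1.symm, by rwa [Finset.inter_comm], by rwa [Sym2.eq_swap]⟩
  loopless := ⟨fun i h => h.1 rfl⟩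

/-- The random key graph `G(n, K, P)`: an edge is present iff the key rings intersect. -/
def rkgGraph {n K P : ℕ} (ω : Fin n → KeyRing P K) : SimpleGraph (Fin n) where
  Adj i j := i ≠ j ∧ ((ω i).1 ∩ (ω j).1).Nonempty
  symm := by
    refine ⟨?_⟩
    rintro i j ⟨h1, h2⟩
    exact ⟨h1.symm, by rwa [Finset.inter_comm]⟩
  loopless := ⟨fun i h => h.1 rfl⟩

/-- The probability measure of the random key graph model. -/
def rkgMeasure (n K P : ℕ) : Measure (Fin n → KeyRing P K) :=
  Measure.pi fun _ : Fin n => uniformKeyMeasure P K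

/-- Degree of a vertex. -/
def gDeg {V : Type*} (G : SimpleGraph V) (v : V) : ℕ := Nat.card {w // G.Adj v w}

/-- Minimum vertex degree. -/
def minDeg {V : Type*} (G : SimpleGraph V) : ℕ := sInf (Set.range (gDeg G))

/-- A graph is `k`-connected if it remains connected after the removal of any
`k - 1` of its vertices. -/
def KConnected {V : Type*} (G : SimpleGraph V) (k : ℕ) : Prop :=
  ∀ S : Finset V, S.card ≤ k - 1 → (G.induce ((S : Set V)ᶜ)).Connected

/-- Vertex connectivity: the least number of vertices whose deletion disconnects
the graph. -/
def vertexConn {V : Type*} (G : SimpleGraph V) : ℕ :=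
  sInf {m | ∃ S : Finset V, S.card = m ∧ ¬ (G.induce ((S : Set V)ᶜ)).Connected}

/-- `p_s`: the probability that two key rings share at least one key. -/
def psf (K P : ℕ) : ℝ :=
  if 2 * K ≤ P then 1 - (Nat.choose (P - K) K : ℝ) / (Nat.choose P K : ℝ) else 1

/-- `p_e = p · p_s`: the probability of an edge in `𝔾_on`. -/
def pef (K P : ℕ) (p : ℝ) : ℝ := p * psf K P

/-- The event `D_{x,ℓ}` that the node with index `x` has degree exactly `ℓ`. -/
def degEvent (n K P : ℕ) (x ℓ : ℕ) : Set (GonSpace n K P) :=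
  {ω | ∃ hx : x < n, gDeg (gonGraph ω) ⟨x, hx⟩ = ℓ}

/-- The event `E_{xy}` that the edge between the nodes with indices `x`, `y` is present. -/
def edgeEvent (n K P : ℕ) (x y : ℕ) : Set (GonSpace n K P) :=
  {ω | ∃ (hx : x < n) (hy : y < n), (gonGraph ω).Adj ⟨x, hx⟩ ⟨y, hy⟩}

/-- The event that the key rings of nodes `x` and `y` share exactly `u` keys. -/
def interCardEvent (n K P : ℕ) (x y u : ℕ) : Set (GonSpace n K P) :=
  {ω | ∃ (hx : x < n) (hy : y < n), ((ω.1 ⟨x, hx⟩).1 ∩ (ω.1 ⟨y, hy⟩).1).card = u}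

/-- The event `K_{xy}` that the key rings of nodes `x` and `y` share at least one key. -/
def keyShareEvent (n K P : ℕ) (x y : ℕ) : Set (GonSpace n K P) :=
  {ω | ∃ (hx : x < n) (hy : y < n), ((ω.1 ⟨x, hx⟩).1 ∩ (ω.1 ⟨y, hy⟩).1).Nonempty}

/-- `r_n = min(⌊P/K⌋, ⌊n/2⌋)`. -/
def rn (n K P : ℕ) : ℕ := min (P / K) (n / 2)

/-- The threshold array `J`. -/
def Jarr (n K P : ℕ) (ε lam mu : ℝ) (i : ℕ) : ℕ :=
  if i ≤ rn n K P then max ⌊(1 + ε) * (K : ℝ)⌋₊ ⌊lam * (K : ℝ) * (i : ℝ)⌋₊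
  else ⌊mu * (P : ℝ)⌋₊

/-- The event `𝓔(J)`: some set `T` of at least two nodes has a union of key rings of
size at most `J_{|T|}`. -/
def EJ (n K P : ℕ) (ε lam mu : ℝ) : Set (GonSpace n K P) :=
  {ω | ∃ T : Finset (Fin n), 2 ≤ T.card ∧
    (T.biUnion fun i => (ω.1 i).1).card ≤ Jarr n K P ε lam mu T.card}

theorem card_mul_sum_pi_eq_sum_update {ι α : Type*} [Fintype ι] [DecidableEq ι] [Fintype α]
    (G : (ι → α) → ℝ) (v : ι) :
    (Fintype.card α : ℝ) * ∑ θ, G θ = ∑ θ : ι → α, ∑ x, G (Function.update θ v x) := by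
  have e : ∑ q : (ι → α) × α, G (Function.update q.1 v q.2) = ∑ q : (ι → α) × α, G q.1 := by
    refine Finset.sum_nbij' (fun q => (Function.update q.1 v q.2, q.1 v))
      (fun q => (Function.update q.1 v q.2, q.1 v)) ?_ ?_ ?_ ?_ ?_ <;> simp
  rw [Fintype.sum_prod_type, Fintype.sum_prod_type] at e
  rw [e, Finset.mul_sum]
  simp

theorem sum_mul_le_of_update {ι α : Type*} [Fintype ι] [DecidableEq ι] [Fintype α] [Nonempty α]
    (F h : (ι → α) → ℝ) (v : ι) (c : ℝ) (hF : ∀ θ, 0 ≤ F θ)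
    (hFv : ∀ θ x, F (Function.update θ v x) = F θ)
    (hh : ∀ θ, F θ ≠ 0 → ∑ x, h (Function.update θ v x) ≤ Fintype.card α * c) :
    ∑ θ, F θ * h θ ≤ c * ∑ θ, F θ := by
  have hN : (0 : ℝ) < Fintype.card α := by exact_mod_cast Fintype.card_pos
  refine le_of_mul_le_mul_left ?_ hN
  rw [card_mul_sum_pi_eq_sum_update _ v, ← mul_assoc, Finset.mul_sum]
  refine Finset.sum_le_sum fun θ _ => ?_
  simp_rw [hFv, ← Finset.mul_sum]
  rcases eq_or_ne (F θ) 0 with h0 | h0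
  · simp [h0]
  · rw [mul_comm]
    exact mul_le_mul_of_nonneg_right (hh θ h0) (hF θ)

/-- Integrating out, one at a time, the vertices of a set `R` that are conditionally independent
given the values on a disjoint set `T`. -/
theorem sum_mul_prod_le {ι α : Type*} [Fintype ι] [DecidableEq ι] [Fintype α] [Nonempty α]
    (F : (ι → α) → ℝ) (h : α → (ι → α) → ℝ) (R : Finset ι) (c : ℝ) (hc : 0 ≤ c)
    (hF : ∀ θ, 0 ≤ F θ) (h0 : ∀ x θ, 0 ≤ h x θ)
    (hFv : ∀ v ∈ R, ∀ θ x, F (Function.update θ v x) = F θ)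
    (hhv : ∀ v ∈ R, ∀ y θ x, h y (Function.update θ v x) = h y θ)
    (hh : ∀ θ, F θ ≠ 0 → ∑ x, h x θ ≤ Fintype.card α * c) :
    ∑ θ, F θ * ∏ v ∈ R, h (θ v) θ ≤ c ^ R.card * ∑ θ, F θ := by
  induction R using Finset.induction_on with
  | empty => simp
  | insert a R ha ih =>
    have ih' := ih (fun v hv => hFv v (Finset.mem_insert_of_mem hv))
      (fun v hv => hhv v (Finset.mem_insert_of_mem hv))
    have haI := Finset.mem_insert_self a R
    have key := sum_mul_le_of_update (fun θ => F θ * ∏ v ∈ R, h (θ v) θ) (fun θ => h (θ a) θ) a c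
      (fun θ => mul_nonneg (hF θ) (Finset.prod_nonneg fun _ _ => h0 _ _))
      (fun θ x => by
        simp only [hFv a haI]
        congr 1
        refine Finset.prod_congr rfl fun v hv => ?_
        rw [hhv a haI, Function.update_of_ne (by rintro rfl; exact ha hv)])
      (fun θ hθ => by
        simp only [Function.update_self, hhv a haI]
        exact hh θ (left_ne_zero_of_mul hθ))
    rw [Finset.card_insert_of_notMem ha, pow_succ', mul_assoc]
    refine le_trans (le_of_eq ?_) (key.trans (mul_le_mul_of_nonneg_left ih' hc))
    refine Finset.sum_congr rfl fun θ _ => ?_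
    rw [Finset.prod_insert ha]
    ring

/-- The total weight of a rooted forest with parent map `f`, all of whose non-root vertices
form the set `D`. -/
theorem sum_prod_parent_le {ι α : Type*} [Fintype ι] [DecidableEq ι] [Fintype α] [Nonempty α]
    (k : α → α → ℝ) (f : ι → ι) (d : ι → ℕ) (c : ℝ) (hc : 0 ≤ c) (h0 : ∀ x y, 0 ≤ k x y)
    (hk : ∀ y, ∑ x, k x y ≤ Fintype.card α * c) (m : ℕ) :
    ∀ D : Finset ι, D.card = m → (∀ v ∈ D, d (f v) < d v) →
    ∑ θ : ι → α, ∏ v ∈ D, k (θ v) (θ (f v)) ≤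
      c ^ m * (Fintype.card α : ℝ) ^ Fintype.card ι := by
  induction m with
  | zero =>
    intro D hD _
    rw [Finset.card_eq_zero] at hD
    simp [hD]
  | succ m ih =>
    intro D hD hd
    obtain ⟨a, haD, hamax⟩ := Finset.exists_max_image D d (Finset.card_pos.1 (by omega))
    have key := sum_mul_le_of_update (fun θ : ι → α => ∏ v ∈ D.erase a, k (θ v) (θ (f v)))
      (fun θ => k (θ a) (θ (f a))) a c (fun θ => Finset.prod_nonneg fun _ _ => h0 _ _)
      (fun θ x => by
        refine Finset.prod_congr rfl fun v hv => ?_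
        obtain ⟨hva, hvD⟩ := Finset.mem_erase.1 hv
        have : f v ≠ a := by
          rintro rfl
          exact absurd (hd v hvD) (not_lt.2 (hamax v hvD))
        rw [Function.update_of_ne hva, Function.update_of_ne this])
      (fun θ _ => by
        have : f a ≠ a := fun h => absurd (hd a haD) (by rw [h]; exact lt_irrefl _)
        simp only [Function.update_self, Function.update_of_ne this]
        exact hk _)
    have ih' := ih (D.erase a) (by rw [Finset.card_erase_of_mem haD]; omega)
      (fun v hv => hd v (Finset.mem_of_mem_erase hv))
    rw [pow_succ', mul_assoc]
    refine le_trans (le_of_eq ?_) (key.trans (mul_le_mul_of_nonneg_left ih' hc))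
    refine Finset.sum_congr rfl fun θ _ => ?_
    rw [Finset.prod_erase_mul _ _ haD]

instance (P K : ℕ) : IsFiniteMeasure (uniformKeyMeasure P K) := by
  unfold uniformKeyMeasure
  rcases isEmpty_or_nonempty (KeyRing P K) with h | h
  · rw [Measure.eq_zero_of_isEmpty (_ • _ : Measure (KeyRing P K))]
    infer_instance
  · exact Measure.smul_finite _ (ENNReal.inv_ne_top.2 (by exact_mod_cast Fintype.card_ne_zero))

instance (p : ℝ) : IsFiniteMeasure (bern p) := by
  unfold bern
  have h1 := Measure.smul_finite (Measure.dirac true : Measure Bool)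
    (ENNReal.ofReal_ne_top (r := p))
  have h2 := Measure.smul_finite (Measure.dirac false : Measure Bool)
    (ENNReal.ofReal_ne_top (r := 1 - p))
  infer_instance

theorem uniformKeyMeasure_singleton {P K : ℕ} (x : KeyRing P K) :
    uniformKeyMeasure P K {x} = ENNReal.ofReal ((Fintype.card (KeyRing P K) : ℝ)⁻¹) := by
  have hN : 0 < Fintype.card (KeyRing P K) := Fintype.card_pos_iff.2 ⟨x⟩
  rw [ENNReal.ofReal_inv_of_pos (by exact_mod_cast hN)]
  simp [uniformKeyMeasure]

theorem bern_apply (p : ℝ) (B : Set Bool) [DecidablePred (· ∈ B)] (hp0 : 0 ≤ p) (hp1 : p ≤ 1) :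
    bern p B = ENNReal.ofReal
      ((if true ∈ B then p else 0) + (if false ∈ B then 1 - p else 0)) := by
  rw [ENNReal.ofReal_add (by split_ifs <;> linarith) (by split_ifs <;> linarith)]
  simp only [bern, Measure.add_apply, Measure.smul_apply, MeasurableSet.of_discrete,
    Measure.dirac_apply', Set.indicator, Pi.one_apply, smul_eq_mul]
  congr 1 <;> split_ifs <;> simp

/-- The channel law of the event that every pair in `F` is joined and no pair in `M` is joined. -/
theorem pi_bern_edges_le {ι : Type*} [Fintype ι] [DecidableEq ι] (p : ℝ) (hp0 : 0 ≤ p) (hp1 : p ≤ 1)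
    (E : Set ι) [DecidablePred (· ∈ E)] (F M : Finset ι) (hFM : Disjoint F M) :
    (Measure.pi fun _ : ι => bern p)
      {c | (∀ e ∈ F, e ∈ E ∧ c e = true) ∧ ∀ e ∈ M, ¬ (e ∈ E ∧ c e = true)} =
    ENNReal.ofReal ((∏ e ∈ F, p * (if e ∈ E then 1 else 0)) *
      ∏ e ∈ M, (1 - p * (if e ∈ E then 1 else 0))) := by
  classical
  have hset : {c : ι → Bool | (∀ e ∈ F, e ∈ E ∧ c e = true) ∧ ∀ e ∈ M, ¬ (e ∈ E ∧ c e = true)} =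
      Set.pi Set.univ fun e => {b : Bool | (e ∈ F → e ∈ E ∧ b = true) ∧
        (e ∈ M → ¬ (e ∈ E ∧ b = true))} := by
    ext c
    simp only [Set.mem_ofPred_eq, Set.mem_pi, Set.mem_univ, true_implies, forall_and]
  rw [hset, Measure.pi_pi]
  simp_rw [bern_apply p _ hp0 hp1]
  rw [← ENNReal.ofReal_prod_of_nonneg
    (fun e _ => by split_ifs <;> linarith)]
  congr 1
  rw [← Finset.prod_subset (Finset.subset_univ (F ∪ M)), Finset.prod_union hFM]
  · congr 1 <;> refine Finset.prod_congr rfl fun e he => ?_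
    · have := Finset.disjoint_left.1 hFM he
      by_cases hE : e ∈ E <;> simp [he, this, hE]
    · have := Finset.disjoint_right.1 hFM he
      by_cases hE : e ∈ E <;> simp [he, this, hE]
  · intro e _ he
    simp only [Finset.mem_union, not_or] at he
    simp [he.1, he.2]

/-- Indicator that two key rings share a key. -/
def shareInd {P K : ℕ} (x y : KeyRing P K) : ℝ := if (x.1 ∩ y.1).Nonempty then 1 else 0

theorem shareInd_nonneg {P K : ℕ} (x y : KeyRing P K) : 0 ≤ shareInd x y := by
  unfold shareInd; split_ifs <;> norm_num

theorem shareInd_le_one {P K : ℕ} (x y : KeyRing P K) : shareInd x y ≤ 1 := by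
  unfold shareInd; split_ifs <;> norm_num

/-- The event that all pairs `{v, f v}`, `v ∈ (T ∪ S) \ {root}`, are edges, that `T` has no
edge to the complement of `T ∪ S`, and that the key rings satisfy `Q`. -/
def treeEvent {n K P : ℕ} (Q : (Fin n → KeyRing P K) → Prop) (T S : Finset (Fin n))
    (root : Fin n) (f : Fin n → Fin n) : Set (GonSpace n K P) :=
  {ω | Q ω.1 ∧ (∀ v ∈ (T ∪ S).erase root, (gonGraph ω).Adj v (f v)) ∧
    ∀ v ∈ (T ∪ S)ᶜ, ∀ t ∈ T, ¬ (gonGraph ω).Adj v t}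

theorem pi_bern_treeEvent {n K P : ℕ} (p : ℝ) (hp0 : 0 ≤ p) (hp1 : p ≤ 1)
    (θ : Fin n → KeyRing P K) (T S : Finset (Fin n)) (root : Fin n) (f : Fin n → Fin n)
    (d : Fin n → ℕ) (hf : ∀ v ∈ (T ∪ S).erase root, f v ∈ T ∧ d (f v) < d v) :
    (Measure.pi fun _ : Sym2 (Fin n) => bern p)
      {c | (∀ v ∈ (T ∪ S).erase root, (gonGraph (θ, c)).Adj v (f v)) ∧
        ∀ v ∈ (T ∪ S)ᶜ, ∀ t ∈ T, ¬ (gonGraph (θ, c)).Adj v t} =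
    ENNReal.ofReal ((∏ v ∈ (T ∪ S).erase root, p * shareInd (θ v) (θ (f v))) *
      ∏ v ∈ (T ∪ S)ᶜ, ∏ t ∈ T, (1 - p * shareInd (θ v) (θ t))) := by
  classical
  set D := (T ∪ S).erase root with hD
  set R := (T ∪ S)ᶜ with hR
  have hTR : ∀ v ∈ R, v ∉ T ∧ v ∉ S := fun v hv => by
    simpa [hR, not_or] using hv
  have hDT : ∀ v ∈ D, v ∈ T ∪ S := fun v hv => Finset.mem_of_mem_erase hv
  have hadj : ∀ (c : Sym2 (Fin n) → Bool) v w, (gonGraph (θ, c)).Adj v w ↔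
      s(v, w) ∈ (rkgGraph θ).edgeSet ∧ c s(v, w) = true := by
    intro c v w
    simp [gonGraph, rkgGraph, SimpleGraph.mem_edgeSet, and_assoc]
  have hind : ∀ v w, v ≠ w →
      (if s(v, w) ∈ (rkgGraph θ).edgeSet then (1 : ℝ) else 0) = shareInd (θ v) (θ w) := by
    intro v w hvw
    simp [rkgGraph, SimpleGraph.mem_edgeSet, shareInd, hvw]
  have hne : ∀ v ∈ D, v ≠ f v := fun v hv h => by
    have := (hf v hv).2
    rw [← h] at this
    exact lt_irrefl _ this
  have hinjF : Set.InjOn (fun v => s(v, f v)) (D : Set (Fin n)) := by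
    intro v hv w hw h
    simp only [Sym2.eq_iff] at h
    rcases h with h | ⟨h1, h2⟩
    · exact h.1
    · have a := (hf v hv).2
      have b := (hf w hw).2
      rw [h2] at a
      rw [← h1] at b
      omega
  have hinjM : Set.InjOn (fun q : Fin n × Fin n => s(q.1, q.2)) (R ×ˢ T : Finset _) := by
    rintro ⟨v, t⟩ hv ⟨w, u⟩ hw h
    simp only [Finset.mem_coe, Finset.mem_product] at hv hw
    simp only [Sym2.eq_iff] at h
    rcases h with h | ⟨h1, h2⟩
    · simp [h.1, h.2]
    · exact absurd hw.2 (h1 ▸ (hTR v hv.1).1)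
  have hdisj : Disjoint (D.image fun v => s(v, f v))
      ((R ×ˢ T).image fun q : Fin n × Fin n => s(q.1, q.2)) := by
    rw [Finset.disjoint_left]
    intro e he he'
    obtain ⟨v, hv, rfl⟩ := Finset.mem_image.1 he
    obtain ⟨⟨w, t⟩, hw, h⟩ := Finset.mem_image.1 he'
    have hw := hTR w (Finset.mem_product.1 hw).1
    rcases Sym2.eq_iff.1 h with ⟨h1, _⟩ | ⟨h1, _⟩
    · have h1 : w = v := h1
      rw [h1] at hw
      have := hDT v hv
      simp [hw.1, hw.2] at this
    · have h1 : w = f v := h1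
      rw [h1] at hw
      exact hw.1 (hf v hv).1
  have key := pi_bern_edges_le p hp0 hp1 (rkgGraph θ).edgeSet _ _ hdisj
  rw [Finset.prod_image hinjF, Finset.prod_image hinjM, Finset.prod_product] at key
  have e1 : ∏ v ∈ D, p * (if s(v, f v) ∈ (rkgGraph θ).edgeSet then (1 : ℝ) else 0) =
      ∏ v ∈ D, p * shareInd (θ v) (θ (f v)) :=
    Finset.prod_congr rfl fun v hv => by rw [hind v (f v) (hne v hv)]
  have e2 : ∏ v ∈ R, ∏ t ∈ T,
        (1 - p * (if s(v, t) ∈ (rkgGraph θ).edgeSet then (1 : ℝ) else 0)) =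
      ∏ v ∈ R, ∏ t ∈ T, (1 - p * shareInd (θ v) (θ t)) :=
    Finset.prod_congr rfl fun v hv => Finset.prod_congr rfl fun t ht => by
      rw [hind v t (by rintro rfl; exact (hTR v hv).1 ht)]
  rw [← e1, ← e2, ← key]
  congr 1
  ext c
  simp only [hadj, Set.mem_ofPred_eq, Finset.forall_mem_image, Finset.mem_product, Prod.forall,
    and_imp]
  exact and_congr_right fun _ => ⟨fun h v t hv ht => h v hv t ht, fun h v hv t ht => h v t hv ht⟩

theorem measureReal_treeEvent_le {n K P : ℕ} (p : ℝ) (hp0 : 0 ≤ p) (hp1 : p ≤ 1)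
    [Nonempty (KeyRing P K)]
    (Q : (Fin n → KeyRing P K) → Prop) (T S : Finset (Fin n)) (root : Fin n)
    (hroot : root ∈ T) (hTS : Disjoint T S)
    (hQ : ∀ v ∉ T, ∀ θ x, Q (Function.update θ v x) ↔ Q θ)
    (f : Fin n → Fin n) (d : Fin n → ℕ)
    (hf : ∀ v ∈ (T ∪ S).erase root, f v ∈ T ∧ d (f v) < d v) (q b : ℝ)
    (hq : ∀ y : KeyRing P K, ∑ x, shareInd x y ≤ Fintype.card (KeyRing P K) * q) (hq0 : 0 ≤ q)
    (hb0 : 0 ≤ b)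
    (hb : ∀ θ, Q θ → ∑ x, ∏ t ∈ T, (1 - p * shareInd x (θ t)) ≤ Fintype.card (KeyRing P K) * b) :
    (gonMeasure n K P p).real (treeEvent Q T S root f) ≤
      (p * q) ^ (T.card + S.card - 1) * b ^ (n - T.card - S.card) := by
  classical
  set D := (T ∪ S).erase root with hD
  set R := (T ∪ S)ᶜ with hR
  set N := Fintype.card (KeyRing P K) with hN
  have hN0 : (0 : ℝ) < N := by exact_mod_cast Fintype.card_pos
  have hTR : ∀ v ∈ R, v ∉ T ∧ v ∉ S := fun v hv => by
    simpa [hR, not_or] using hv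
  have hcT : (T ∪ S).card = T.card + S.card := Finset.card_union_of_disjoint hTS
  have hcD : D.card = T.card + S.card - 1 := by
    rw [hD, Finset.card_erase_of_mem (Finset.mem_union_left _ hroot), hcT]
  have hcR : R.card = n - T.card - S.card := by
    rw [hR, Finset.card_compl, hcT, Fintype.card_fin]; omega
  have hfac0 : ∀ x y : KeyRing P K, 0 ≤ 1 - p * shareInd x y := fun x y => by
    nlinarith [shareInd_nonneg x y, shareInd_le_one x y]
  set A : (Fin n → KeyRing P K) → ℝ := fun θ => ∏ v ∈ D, p * shareInd (θ v) (θ (f v)) with hA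
  have hA0 : ∀ θ, 0 ≤ A θ := fun θ =>
    Finset.prod_nonneg fun _ _ => mul_nonneg hp0 (shareInd_nonneg _ _)
  set I : (Fin n → KeyRing P K) → ℝ := fun θ => if Q θ then 1 else 0 with hI
  have hI0 : ∀ θ, 0 ≤ I θ := fun θ => by simp only [hI]; split_ifs <;> norm_num
  have hI1 : ∀ θ, I θ ≤ 1 := fun θ => by simp only [hI]; split_ifs <;> norm_num
  set B : (Fin n → KeyRing P K) → ℝ :=
    fun θ => ∏ v ∈ R, ∏ t ∈ T, (1 - p * shareInd (θ v) (θ t)) with hB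
  have hB0 : ∀ θ, 0 ≤ B θ := fun θ =>
    Finset.prod_nonneg fun _ _ => Finset.prod_nonneg fun _ _ => hfac0 _ _
  have hmeas : gonMeasure n K P p (treeEvent Q T S root f) =
      ENNReal.ofReal ((∑ θ, I θ * A θ * B θ) * ((N : ℝ)⁻¹) ^ n) := by
    have hnn : ∀ θ, 0 ≤ I θ * A θ * B θ := fun θ =>
      mul_nonneg (mul_nonneg (hI0 θ) (hA0 θ)) (hB0 θ)
    rw [gonMeasure, Measure.prod_apply MeasurableSet.of_discrete, lintegral_fintype,
      Finset.sum_mul, ENNReal.ofReal_sum_of_nonneg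
        (fun θ _ => mul_nonneg (hnn θ) (by positivity))]
    refine Finset.sum_congr rfl fun θ _ => ?_
    rw [ENNReal.ofReal_mul (hnn θ)]
    congr 1
    · by_cases h : Q θ
      · have := pi_bern_treeEvent p hp0 hp1 θ T S root f d hf
        simp only [hI, if_pos h, one_mul, hA, hB, hD, hR]
        rw [← this]
        congr 1
        ext c
        simp [treeEvent, h]
      · have h1 : Prod.mk θ ⁻¹' treeEvent Q T S root f = ∅ := by
          ext c
          simp [treeEvent, h]
        rw [h1]
        simp [hI, h]
    · rw [Measure.pi_singleton]
      simp_rw [uniformKeyMeasure_singleton]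
      rw [Finset.prod_const, Finset.card_univ, Fintype.card_fin,
        ENNReal.ofReal_pow (by positivity)]
  have hIA : ∀ v ∈ R, ∀ θ x, I (Function.update θ v x) * A (Function.update θ v x) =
      I θ * A θ := by
    intro v hv θ x
    congr 1
    · simp only [hI, hQ v (hTR v hv).1]
    · refine Finset.prod_congr rfl fun w hw => ?_
      have h1 : w ≠ v := by
        rintro rfl
        have := Finset.mem_of_mem_erase hw
        simp [(hTR w hv).1, (hTR w hv).2] at this
      have h2 : f w ≠ v := by
        rintro h
        exact (hTR v hv).1 (h ▸ (hf w hw).1)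
      rw [Function.update_of_ne h1, Function.update_of_ne h2]
  have step1 := sum_mul_prod_le (fun θ => I θ * A θ)
    (fun x θ => ∏ t ∈ T, (1 - p * shareInd x (θ t))) R b hb0
    (fun θ => mul_nonneg (hI0 θ) (hA0 θ))
    (fun x θ => Finset.prod_nonneg fun _ _ => hfac0 _ _) hIA
    (fun v hv y θ x => Finset.prod_congr rfl fun t ht => by
      rw [Function.update_of_ne (by rintro rfl; exact (hTR t hv).1 ht)])
    (fun θ hθ => hb θ (by
      by_contra h
      exact hθ (by simp [hI, h])))
  have step2 := sum_prod_parent_le (fun x y : KeyRing P K => p * shareInd x y) f d (p * q)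
    (mul_nonneg hp0 hq0) (fun x y => mul_nonneg hp0 (shareInd_nonneg _ _))
    (fun y => by
      rw [← Finset.mul_sum]
      nlinarith [mul_le_mul_of_nonneg_left (hq y) hp0]) D.card D rfl (fun v hv => (hf v hv).2)
  have step3 : ∑ θ, I θ * A θ ≤ (p * q) ^ D.card * (N : ℝ) ^ n := by
    rw [Fintype.card_fin] at step2
    refine le_trans (Finset.sum_le_sum fun θ _ => ?_) step2
    exact mul_le_of_le_one_left (hA0 θ) (hI1 θ)
  have step4 : ∑ θ, I θ * A θ * B θ ≤ b ^ R.card * ((p * q) ^ D.card * (N : ℝ) ^ n) :=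
    step1.trans (mul_le_mul_of_nonneg_left step3 (by positivity))
  rw [measureReal_def, hmeas, ENNReal.toReal_ofReal (mul_nonneg (Finset.sum_nonneg fun θ _ =>
    mul_nonneg (mul_nonneg (hI0 θ) (hA0 θ)) (hB0 θ)) (by positivity)), ← hcD, ← hcR]
  calc _ ≤ b ^ R.card * ((p * q) ^ D.card * (N : ℝ) ^ n) * ((N : ℝ)⁻¹) ^ n :=
        mul_le_mul_of_nonneg_right step4 (by positivity)
    _ = (p * q) ^ D.card * b ^ R.card * ((N : ℝ) * (N : ℝ)⁻¹) ^ n := by rw [mul_pow]; ring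
    _ = _ := by rw [mul_inv_cancel₀ hN0.ne', one_pow, mul_one]

theorem SimpleGraph.Reachable.mem_of_closed {V : Type*} {H : SimpleGraph V} {A : Set V} {u v : V}
    (h : H.Reachable u v) (hA : ∀ a ∈ A, ∀ b, H.Adj a b → b ∈ A) (hu : u ∈ A) : v ∈ A := by
  obtain ⟨w⟩ := h
  induction w with
  | nil => exact hu
  | cons hadj _ ih => exact ih (hA _ hu _ hadj)

theorem SimpleGraph.Reachable.exists_adj_dist_lt {V : Type*} {H : SimpleGraph V} {u v : V}
    (h : H.Reachable v u) (hne : v ≠ u) :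
    ∃ w, H.Adj v w ∧ H.Reachable w u ∧ H.dist w u < H.dist v u := by
  obtain ⟨w, hw⟩ := h.exists_walk_length_eq_dist
  cases w with
  | nil => exact absurd rfl hne
  | cons hadj q =>
    refine ⟨_, hadj, ⟨q⟩, ?_⟩
    rw [← hw, SimpleGraph.Walk.length_cons]
    exact Nat.lt_succ_of_le (SimpleGraph.dist_le q)

/-- A nonempty disconnected graph has a vertex whose component covers at most half of it. -/
theorem exists_small_component {V : Type*} [Fintype V] [DecidableEq V] (H : SimpleGraph V)
    [Nonempty V] (hH : ¬ H.Connected) :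
    ∃ u v : V, ¬ H.Reachable u v ∧ 2 * Nat.card {w // H.Reachable w u} ≤ Fintype.card V := by
  classical
  have : ∃ u v, ¬ H.Reachable u v := by
    by_contra! h
    exact hH ⟨fun u v => h u v⟩
  obtain ⟨u, v, huv⟩ := this
  have hsum : Nat.card {w // H.Reachable w u} + Nat.card {w // H.Reachable w v} ≤
      Fintype.card V := by
    rw [Nat.card_eq_fintype_card, Nat.card_eq_fintype_card, Fintype.card_subtype,
      Fintype.card_subtype, ← Finset.card_union_of_disjoint]
    · exact Finset.card_le_univ _
    · rw [Finset.disjoint_left]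
      intro w hw hw'
      simp only [Finset.mem_filter, Finset.mem_univ, true_and] at hw hw'
      exact huv (hw.symm.trans hw')
  rcases le_total (Nat.card {w // H.Reachable w u}) (Nat.card {w // H.Reachable w v}) with h | h
  · exact ⟨u, v, huv, by omega⟩
  · exact ⟨v, u, fun h' => huv h'.symm, by omega⟩

/-- If the connectivity equals `ℓ` and all degrees exceed `ℓ`, some set `S` of `ℓ` vertices cuts
off a set `T` of at least two and at most half of the vertices, and `T ∪ S` carries a spanning
tree (given by its parent map) in which the vertices of `S` are leaves. -/
theorem exists_separated_tree {V : Type*} [Fintype V] [DecidableEq V] (G : SimpleGraph V) (ℓ : ℕ)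
    (hconn : vertexConn G = ℓ) (hdeg : ℓ < minDeg G) (hV : ℓ < Fintype.card V) :
    ∃ (S T : Finset V) (root : V) (f : V → V) (d : V → ℕ), S.card = ℓ ∧ 2 ≤ T.card ∧
      2 * T.card ≤ Fintype.card V ∧ root ∈ T ∧ Disjoint T S ∧
      (∀ v ∈ (T ∪ S).erase root, f v ∈ T ∧ d (f v) < d v) ∧
      (∀ v ∉ (T ∪ S).erase root, f v = root) ∧
      (∀ v ∈ (T ∪ S).erase root, G.Adj v (f v)) ∧ ∀ v ∈ (T ∪ S)ᶜ, ∀ t ∈ T, ¬ G.Adj v t := by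
  classical
  have hne : {m | ∃ S : Finset V, S.card = m ∧
      ¬ (G.induce ((S : Set V)ᶜ)).Connected}.Nonempty := by
    refine ⟨_, Finset.univ, rfl, fun h => ?_⟩
    obtain ⟨⟨x, hx⟩⟩ := h.nonempty
    simp at hx
  obtain ⟨S, hS, hSc⟩ : ∃ S : Finset V, S.card = ℓ ∧ ¬ (G.induce ((S : Set V)ᶜ)).Connected := by
    have := Nat.sInf_mem hne
    rw [← vertexConn, hconn] at this
    exact this
  have hmin : ∀ S' : Finset V, S'.card < ℓ → (G.induce ((S' : Set V)ᶜ)).Connected := by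
    intro S' hS'
    by_contra h
    have : vertexConn G ≤ S'.card := Nat.sInf_le ⟨S', rfl, h⟩
    omega
  set H := G.induce ((S : Set V)ᶜ) with hH
  have hcardV : Fintype.card ↥((S : Set V)ᶜ) = Fintype.card V - ℓ := by
    rw [Fintype.card_compl_set, ← hS]; simp
  have : Nonempty ↥((S : Set V)ᶜ) := Fintype.card_pos_iff.1 (by omega)
  obtain ⟨u, u', huu', hcard⟩ := exists_small_component H hSc
  set T : Finset V := (Finset.univ.filter fun w => H.Reachable w u).image Subtype.val with hT
  have hmemT : ∀ v, v ∈ T ↔ ∃ h : v ∉ S, H.Reachable ⟨v, by simpa using h⟩ u := by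
    intro v
    simp only [hT, Finset.mem_image, Finset.mem_filter, Finset.mem_univ, true_and]
    constructor
    · rintro ⟨w, hw, rfl⟩
      exact ⟨fun h => w.2 (Finset.mem_coe.2 h), hw⟩
    · rintro ⟨h, hw⟩
      exact ⟨_, hw, rfl⟩
  have hcT : T.card = Nat.card {w // H.Reachable w u} := by
    rw [hT, Finset.card_image_of_injective _ Subtype.val_injective, Nat.card_eq_fintype_card,
      Fintype.card_subtype]
  have hroot : u.1 ∈ T := (hmemT _).2 ⟨fun h => u.2 (Finset.mem_coe.2 h),
    SimpleGraph.Reachable.refl _⟩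
  have hTS : Disjoint T S := Finset.disjoint_left.2 fun v hv => ((hmemT v).1 hv).1
  have hclosed : ∀ t ∈ T, ∀ v, G.Adj t v → v ∉ S → v ∈ T := by
    intro t ht v hadj hv
    obtain ⟨hs, hr⟩ := (hmemT t).1 ht
    refine (hmemT v).2 ⟨hv, SimpleGraph.Reachable.trans (SimpleGraph.Adj.reachable ?_) hr⟩
    simpa [hH] using hadj.symm
  have hSadj : ∀ s ∈ S, ∃ t ∈ T, G.Adj s t := by
    intro s hs
    by_contra! h
    have hlt : (S.erase s).card < ℓ := by
      rw [Finset.card_erase_of_mem hs, hS]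
      have := Finset.card_pos.2 ⟨s, hs⟩
      omega
    have hc := hmin _ hlt
    have hus : u.1 ∉ S.erase s := fun h => ((hmemT _).1 hroot).1 (Finset.mem_of_mem_erase h)
    have hr := hc.preconnected ⟨u.1, fun h => hus (Finset.mem_coe.1 h)⟩ ⟨s, by simp⟩
    have := hr.mem_of_closed (A := {x : ↥(((S.erase s : Finset V) : Set V)ᶜ) | x.1 ∈ T}) (by
      rintro ⟨a, ha⟩ haT ⟨b, hb⟩ hab
      have hab : G.Adj a b := by simpa using hab
      have hbs : b ≠ s := by
        rintro rfl
        exact h a haT hab.symm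
      have hbS : b ∉ S := fun h' => by
        simp [hbs, h'] at hb
      exact hclosed a haT b hab hbS) hroot
    exact Finset.disjoint_left.1 hTS this hs
  have hTadj : ∀ v ∈ T, v ≠ u.1 → ∃ w, ∃ hw : w ∈ T, ∃ hv : v ∈ T, G.Adj v w ∧
      H.dist ⟨w, by simpa using ((hmemT w).1 hw).1⟩ u <
        H.dist ⟨v, by simpa using ((hmemT v).1 hv).1⟩ u := by
    intro v hv hvu
    obtain ⟨hs, hr⟩ := (hmemT v).1 hv
    obtain ⟨w, hadj, hwr, hlt⟩ := hr.exists_adj_dist_lt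
      (by rintro rfl; exact hvu rfl)
    have hwT : w.1 ∈ T := (hmemT _).2 ⟨fun h => w.2 (Finset.mem_coe.2 h), hwr⟩
    exact ⟨w.1, hwT, hv, by simpa [hH] using hadj, hlt⟩
  let d0 : V → ℕ := fun v => if h : v ∈ T then
    H.dist ⟨v, by simpa using ((hmemT v).1 h).1⟩ u else 0
  let d : V → ℕ := fun v => if v ∈ T then d0 v else 1 + ∑ w, d0 w
  have hex : ∀ v ∈ (T ∪ S).erase u.1, ∃ w, w ∈ T ∧ d w < d v ∧ G.Adj v w := by
    intro v hv
    obtain ⟨hvu, hv⟩ := Finset.mem_erase.1 hv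
    rcases Finset.mem_union.1 hv with hvT | hvS
    · obtain ⟨w, hw, hv', hadj, hlt⟩ := hTadj v hvT hvu
      exact ⟨w, hw, by simpa [d, d0, hw, hvT] using hlt, hadj⟩
    · obtain ⟨w, hw, hadj⟩ := hSadj v hvS
      refine ⟨w, hw, ?_, hadj⟩
      have hvT : v ∉ T := fun h => Finset.disjoint_left.1 hTS h hvS
      have : d0 w ≤ ∑ w, d0 w := Finset.single_le_sum (fun _ _ => Nat.zero_le _)
        (Finset.mem_univ w)
      simp only [d, if_pos hw, if_neg hvT]
      omega
  choose! g hg using hex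
  refine ⟨S, T, u.1, fun v => if v ∈ (T ∪ S).erase u.1 then g v else u.1, d, hS, ?_, by omega,
    hroot, hTS, ?_, ?_, ?_, ?_⟩
  · by_contra hlt
    have h1 : T.card = 1 := by
      have := Finset.card_pos.2 ⟨_, hroot⟩
      omega
    obtain ⟨a, ha⟩ := Finset.card_eq_one.1 h1
    have hua : u.1 = a := by rw [ha] at hroot; simpa using hroot
    have hsub : (Finset.univ.filter fun w => G.Adj u.1 w) ⊆ S := by
      intro w hw
      have hw : G.Adj u.1 w := by simpa using hw
      by_contra hwS
      have := hclosed _ hroot w hw hwS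
      rw [ha, ← hua, Finset.mem_singleton] at this
      rw [this] at hw
      exact G.loopless.irrefl _ hw
    have h2 : gDeg G u.1 ≤ ℓ := by
      rw [gDeg, Nat.card_eq_fintype_card, Fintype.card_subtype, ← hS]
      exact Finset.card_le_card hsub
    have h3 : minDeg G ≤ gDeg G u.1 := Nat.sInf_le ⟨_, rfl⟩
    omega
  · intro v hv
    simp only [if_pos hv]
    exact ⟨(hg v hv).1, (hg v hv).2.1⟩
  · intro v hv
    simp only [if_neg hv]
  · intro v hv
    simp only [if_pos hv]
    exact (hg v hv).2.2
  · intro v hv t ht hadj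
    simp only [Finset.mem_compl, Finset.mem_union, not_or] at hv
    exact hv.1 (hclosed t ht v hadj.symm hv.2)

/-- Every subset of `T` with at least two elements has more than `J` keys in total. -/
def GoodRings {n K P : ℕ} (J : ℕ → ℕ) (T : Finset (Fin n)) (θ : Fin n → KeyRing P K) : Prop :=
  ∀ B ⊆ T, 2 ≤ B.card → J B.card < (B.biUnion fun i => (θ i).1).card

theorem goodRings_update {n K P : ℕ} (J : ℕ → ℕ) (T : Finset (Fin n)) (v : Fin n) (hv : v ∉ T)
    (θ : Fin n → KeyRing P K) (x : KeyRing P K) :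
    GoodRings J T (Function.update θ v x) ↔ GoodRings J T θ := by
  unfold GoodRings
  refine forall₂_congr fun B hB => ?_
  have : (B.biUnion fun i => (Function.update θ v x i).1) = B.biUnion fun i => (θ i).1 :=
    Finset.biUnion_congr rfl fun i hi => by
      rw [Function.update_of_ne (by rintro rfl; exact hv (hB hi))]
  rw [this]

/-- Union bound over all separating configurations. -/
theorem measureReal_conn_eq_le {n K P ℓ : ℕ} (p : ℝ) (hp0 : 0 ≤ p) (hp1 : p ≤ 1)
    [Nonempty (KeyRing P K)] (ε lam mu : ℝ) (hn : ℓ < n) (q : ℝ) (b : ℕ → ℝ)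
    (hq : ∀ y : KeyRing P K, ∑ x, shareInd x y ≤ Fintype.card (KeyRing P K) * q) (hq0 : 0 ≤ q)
    (hb0 : ∀ r, 0 ≤ b r)
    (hb : ∀ T : Finset (Fin n), 2 ≤ T.card → T.card ≤ n / 2 → ∀ θ : Fin n → KeyRing P K,
      GoodRings (Jarr n K P ε lam mu) T θ →
      ∑ x, ∏ t ∈ T, (1 - p * shareInd x (θ t)) ≤ Fintype.card (KeyRing P K) * b T.card) :
    (gonMeasure n K P p).real ({ω | vertexConn (gonGraph ω) = ℓ} ∩
      {ω | ℓ < minDeg (gonGraph ω)} ∩ (EJ n K P ε lam mu)ᶜ) ≤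
    ∑ r ∈ Finset.Icc 2 (n / 2), (n.choose r : ℝ) * ((n.choose ℓ : ℝ) *
      ((r : ℝ) * ((r : ℝ) ^ (r + ℓ - 1) * ((p * q) ^ (r + ℓ - 1) * b r ^ (n - r - ℓ))))) := by
  classical
  set J := Jarr n K P ε lam mu with hJ
  have hfin : IsFiniteMeasure (gonMeasure n K P p) := by unfold gonMeasure; infer_instance
  let X : Finset (Fin n) → Finset (Fin n) → Fin n → Finset (Fin n → Fin n) :=
    fun T S root => Fintype.piFinset fun v => if v ∈ (T ∪ S).erase root then T else {root}
  let A : Finset (Fin n) → Finset (Fin n) → Fin n → (Fin n → Fin n) → Set (GonSpace n K P) :=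
    fun T S root f => {ω | ω ∈ treeEvent (GoodRings J T) T S root f ∧ Disjoint T S ∧
      ∃ d : Fin n → ℕ, ∀ v ∈ (T ∪ S).erase root, f v ∈ T ∧ d (f v) < d v}
  have hsub : ({ω | vertexConn (gonGraph ω) = ℓ} ∩
      {ω | ℓ < minDeg (gonGraph ω)} ∩ (EJ n K P ε lam mu)ᶜ : Set (GonSpace n K P)) ⊆
      ⋃ r ∈ Finset.Icc 2 (n / 2), ⋃ T ∈ Finset.powersetCard r Finset.univ,
        ⋃ S ∈ Finset.powersetCard ℓ Finset.univ, ⋃ root ∈ T, ⋃ f ∈ X T S root, A T S root f := by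
    rintro ω ⟨⟨h1, h2⟩, h3⟩
    obtain ⟨S, T, root, f, d, hS, hT2, hTn, hr, hTS, hf, hf', hadj, hsep⟩ :=
      exists_separated_tree (gonGraph ω) ℓ h1 h2 (by simpa using hn)
    rw [Fintype.card_fin] at hTn
    simp only [Set.mem_iUnion]
    refine ⟨T.card, Finset.mem_Icc.2 ⟨hT2, by omega⟩, T, by simp, S, by simp [hS], root, hr, f,
      ?_, ⟨?_, hadj, hsep⟩, hTS, d, hf⟩
    · rw [Fintype.mem_piFinset]
      intro v
      split_ifs with hv
      · exact (hf v hv).1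
      · simp [hf' v hv]
    · intro B _ hB2
      by_contra hle
      exact h3 ⟨B, hB2, not_lt.1 hle⟩
  refine (measureReal_mono hsub (measure_ne_top _ _)).trans ?_
  refine (measureReal_biUnion_finset_le _ _).trans (Finset.sum_le_sum fun r hr => ?_)
  obtain ⟨hr2, hrn⟩ := Finset.mem_Icc.1 hr
  have hcT : (n.choose r : ℝ) =
      ((Finset.powersetCard r (Finset.univ : Finset (Fin n))).card : ℝ) := by
    simp
  have hcS : (n.choose ℓ : ℝ) =
      ((Finset.powersetCard ℓ (Finset.univ : Finset (Fin n))).card : ℝ) := by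
    simp
  rw [hcT, ← nsmul_eq_mul]
  refine (measureReal_biUnion_finset_le _ _).trans (Finset.sum_le_card_nsmul _ _ _ fun T hT => ?_)
  rw [hcS, ← nsmul_eq_mul]
  refine (measureReal_biUnion_finset_le _ _).trans (Finset.sum_le_card_nsmul _ _ _ fun S hS => ?_)
  have hT := (Finset.mem_powersetCard.1 hT).2
  have hS := (Finset.mem_powersetCard.1 hS).2
  by_cases hTS : Disjoint T S
  swap
  · have : (⋃ root ∈ T, ⋃ f ∈ X T S root, A T S root f) = ∅ := by
      simp [A, hTS]
    rw [this, measureReal_empty]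
    have := hb0 r
    positivity
  rw [← hT, ← nsmul_eq_mul]
  refine (measureReal_biUnion_finset_le _ _).trans
    (Finset.sum_le_card_nsmul _ _ _ fun root hroot => ?_)
  have hcX : ((X T S root).card : ℝ) = (T.card : ℝ) ^ (T.card + ℓ - 1) := by
    rw [Fintype.card_piFinset]
    have : ∀ v, (if v ∈ (T ∪ S).erase root then T else {root}).card =
        if v ∈ (T ∪ S).erase root then T.card else 1 := fun v => by split_ifs <;> simp
    simp_rw [this]
    rw [Finset.prod_ite_mem, Finset.univ_inter, Finset.prod_const,
      Finset.card_erase_of_mem (Finset.mem_union_left _ hroot),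
      Finset.card_union_of_disjoint hTS, hS]
    push_cast
    rfl
  rw [← hcX, ← nsmul_eq_mul]
  refine (measureReal_biUnion_finset_le _ _).trans
    (Finset.sum_le_card_nsmul _ _ _ fun f _ => ?_)
  by_cases hd : ∃ d : Fin n → ℕ, ∀ v ∈ (T ∪ S).erase root, f v ∈ T ∧ d (f v) < d v
  · obtain ⟨d, hd⟩ := hd
    have := measureReal_treeEvent_le p hp0 hp1 (GoodRings J T) T S root hroot hTS
      (fun v hv θ x => goodRings_update J T v hv θ x) f d hd q (b T.card) hq hq0 (hb0 _)
      (hb T (by omega) (by omega))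
    rw [hS] at this
    exact (measureReal_mono (fun ω h => h.1) (measure_ne_top _ _)).trans this
  · have : A T S root f = ∅ := by
      simp only [A, hd, and_false]
      rfl
    rw [this, measureReal_empty]
    have := hb0 T.card
    positivity

theorem descFactorial_mul_pow_le (m P : ℕ) (hm : m ≤ P) (K : ℕ) :
    m.descFactorial K * P ^ K ≤ m ^ K * P.descFactorial K := by
  induction K with
  | zero => simp
  | succ K ih =>
    rw [Nat.descFactorial_succ, Nat.descFactorial_succ, pow_succ, pow_succ]
    have h : (m - K) * P ≤ m * (P - K) := by
      rcases le_total m K with h | h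
      · simp [Nat.sub_eq_zero_of_le h]
      · rw [Nat.sub_mul, Nat.mul_sub]
        exact Nat.sub_le_sub_left (by rw [mul_comm]; exact Nat.mul_le_mul_left _ hm) _
    calc _ = (m - K) * P * (m.descFactorial K * P ^ K) := by ring
      _ ≤ m * (P - K) * (m ^ K * P.descFactorial K) := Nat.mul_le_mul h ih
      _ = _ := by ring

theorem choose_sub_le_mul_exp (P K u : ℕ) (hP : 0 < P) (hu : u ≤ P) :
    ((P - u).choose K : ℝ) ≤ P.choose K * Real.exp (-(u * K / P)) := by
  have hP' : (0 : ℝ) < P := by exact_mod_cast hP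
  have h1 : ((P - u).choose K : ℝ) * (P : ℝ) ^ K ≤ ((P - u : ℕ) : ℝ) ^ K * P.choose K := by
    have h := descFactorial_mul_pow_le (P - u) P (Nat.sub_le _ _) K
    rw [Nat.descFactorial_eq_factorial_mul_choose, Nat.descFactorial_eq_factorial_mul_choose] at h
    have h' : (P - u).choose K * P ^ K ≤ (P - u) ^ K * P.choose K := by
      refine Nat.le_of_mul_le_mul_left ?_ (Nat.factorial_pos K)
      calc _ = K.factorial * (P - u).choose K * P ^ K := by ring
        _ ≤ _ := h
        _ = _ := by ring
    exact_mod_cast h'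
  have h2 : ((P - u : ℕ) : ℝ) ≤ P * Real.exp (-(u / P)) := by
    rw [Nat.cast_sub hu]
    have := Real.add_one_le_exp (-((u : ℝ) / P))
    calc (P : ℝ) - u = P * (-((u : ℝ) / P) + 1) := by field_simp; ring
      _ ≤ _ := mul_le_mul_of_nonneg_left this hP'.le
  have h3 : ((P - u : ℕ) : ℝ) ^ K ≤ (P : ℝ) ^ K * Real.exp (-(u * K / P)) := by
    calc _ ≤ (P * Real.exp (-(u / P))) ^ K := pow_le_pow_left₀ (Nat.cast_nonneg _) h2 K
      _ = _ := by rw [mul_pow, ← Real.exp_nat_mul]; congr 2; ring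
  refine le_of_mul_le_mul_right ?_ (pow_pos hP' K)
  calc _ ≤ _ := h1
    _ ≤ (P : ℝ) ^ K * Real.exp (-(u * K / P)) * P.choose K :=
      mul_le_mul_of_nonneg_right h3 (Nat.cast_nonneg _)
    _ = _ := by ring

theorem choose_le_choose_sub_add (P K u : ℕ) (hP : 0 < P) (hK : 0 < K) :
    (P.choose K : ℝ) ≤ (P - u).choose K + u * K / P * P.choose K := by
  obtain ⟨Q, rfl⟩ : ∃ Q, P = Q + 1 := ⟨P - 1, by omega⟩
  obtain ⟨L, rfl⟩ : ∃ L, K = L + 1 := ⟨K - 1, by omega⟩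
  have hnat : (Q + 1).choose (L + 1) ≤ (Q + 1 - u).choose (L + 1) + u * Q.choose L := by
    induction u with
    | zero => simp
    | succ u ih =>
      refine ih.trans ?_
      rcases Nat.eq_zero_or_pos (Q + 1 - u) with h | h
      · have : Q + 1 - (u + 1) = 0 := by omega
        rw [h, this, Nat.succ_mul]
        omega
      · obtain ⟨m, hm⟩ : ∃ m, Q + 1 - u = m + 1 := ⟨Q + 1 - u - 1, by omega⟩
        have h' : Q + 1 - (u + 1) = m := by omega
        have hle : m.choose L ≤ Q.choose L := Nat.choose_le_choose _ (by omega)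
        rw [hm, h', Nat.choose_succ_succ', Nat.succ_mul]
        omega
  have hid : ((Q : ℝ) + 1) * Q.choose L = (Q + 1).choose (L + 1) * (L + 1) := by
    exact_mod_cast Nat.add_one_mul_choose_eq Q L
  have hcast : ((Q + 1).choose (L + 1) : ℝ) ≤
      (Q + 1 - u).choose (L + 1) + u * Q.choose L := by exact_mod_cast hnat
  have : (u : ℝ) * ((L + 1 : ℕ) : ℝ) / ((Q + 1 : ℕ) : ℝ) * ((Q + 1).choose (L + 1) : ℝ) =
      u * Q.choose L := by
    push_cast
    field_simp
    linear_combination -(u : ℝ) * hid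
  rw [this]
  exact hcast

theorem card_keyRing (P K : ℕ) : Fintype.card (KeyRing P K) = P.choose K := by
  simp

theorem sum_disjoint_keyRing {P K : ℕ} (U : Finset (Fin P)) :
    ∑ x : KeyRing P K, (if Disjoint x.1 U then (1 : ℝ) else 0) = (P - U.card).choose K := by
  have h : (Finset.univ.filter fun x : KeyRing P K => Disjoint x.1 U).map
      (Function.Embedding.subtype _) = Finset.powersetCard K Uᶜ := by
    ext s
    simp only [Finset.mem_map, Finset.mem_filter, Finset.mem_univ, true_and,
      Function.Embedding.subtype_apply, Finset.mem_powersetCard,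
      Finset.subset_compl_iff_disjoint_right]
    constructor
    · rintro ⟨x, hx, rfl⟩
      exact ⟨hx, x.2⟩
    · rintro ⟨h1, h2⟩
      exact ⟨⟨s, h2⟩, h1, rfl⟩
  rw [Finset.sum_boole, ← Finset.card_map, h, Finset.card_powersetCard, Finset.card_compl,
    Fintype.card_fin]

theorem shareInd_eq {P K : ℕ} (x y : KeyRing P K) :
    shareInd x y = 1 - if Disjoint x.1 y.1 then (1 : ℝ) else 0 := by
  unfold shareInd
  by_cases h : Disjoint x.1 y.1
  · simp [h, Finset.disjoint_iff_inter_eq_empty.1 h]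
  · rw [if_neg h, if_pos (by rwa [← Finset.not_disjoint_iff_nonempty_inter]), sub_zero]

theorem psf_eq {K P : ℕ} :
    psf K P = 1 - ((P - K).choose K : ℝ) / (P.choose K : ℝ) := by
  unfold psf
  split_ifs with h
  · rfl
  · rw [Nat.choose_eq_zero_of_lt (by omega)]
    simp

theorem card_keyRing_pos {K P : ℕ} (hKP : K ≤ P) : (0 : ℝ) < Fintype.card (KeyRing P K) := by
  rw [card_keyRing]
  exact_mod_cast Nat.choose_pos hKP

theorem choose_sub_eq_psf {K P : ℕ} (hKP : K ≤ P) :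
    ((P - K).choose K : ℝ) = Fintype.card (KeyRing P K) * (1 - psf K P) := by
  have := card_keyRing_pos hKP
  rw [card_keyRing] at *
  rw [psf_eq]
  field_simp
  ring

theorem sum_shareInd {K P : ℕ} (hKP : K ≤ P) (y : KeyRing P K) :
    ∑ x, shareInd x y = Fintype.card (KeyRing P K) * psf K P := by
  simp_rw [shareInd_eq]
  rw [Finset.sum_sub_distrib, sum_disjoint_keyRing, y.2, choose_sub_eq_psf hKP]
  simp only [Finset.sum_const, Finset.card_univ, nsmul_eq_mul]
  ring

theorem psf_nonneg {K P : ℕ} (hKP : K ≤ P) : 0 ≤ psf K P := by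
  have h0 := card_keyRing_pos hKP
  rw [card_keyRing] at h0
  rw [psf_eq, sub_nonneg, div_le_one h0]
  exact_mod_cast Nat.choose_le_choose K (Nat.sub_le P K)

theorem psf_le_one {K P : ℕ} : psf K P ≤ 1 := by
  rw [psf_eq, sub_le_self_iff]
  positivity

theorem psf_le {K P : ℕ} (hK : 0 < K) (hKP : K ≤ P) : psf K P ≤ (K : ℝ) * K / P := by
  have h0 := card_keyRing_pos hKP
  have := choose_le_choose_sub_add P K K (by omega) hK
  rw [choose_sub_eq_psf hKP, card_keyRing] at this
  rw [card_keyRing] at h0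
  refine le_of_mul_le_mul_left ?_ h0
  linarith

theorem one_sub_exp_le_psf {K P : ℕ} (hK : 0 < K) (hKP : K ≤ P) :
    1 - Real.exp (-((K : ℝ) * K / P)) ≤ psf K P := by
  have h0 := card_keyRing_pos hKP
  have := choose_sub_le_mul_exp P K K (by omega) hKP
  rw [choose_sub_eq_psf hKP, card_keyRing] at this
  rw [card_keyRing] at h0
  have := le_of_mul_le_mul_left this h0
  linarith

theorem sum_prod_one_sub_shareInd {n K P : ℕ} (p : ℝ) (T : Finset (Fin n))
    (θ : Fin n → KeyRing P K) :
    ∑ x, ∏ t ∈ T, (1 - p * shareInd x (θ t)) = ∑ B ∈ T.powerset,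
      p ^ B.card * (1 - p) ^ (T.card - B.card) *
        ((P - (B.biUnion fun i => (θ i).1).card).choose K : ℝ) := by
  classical
  have h1 : ∀ x, ∏ t ∈ T, (1 - p * shareInd x (θ t)) = ∑ B ∈ T.powerset,
      p ^ B.card * (1 - p) ^ (T.card - B.card) *
        (if Disjoint x.1 (B.biUnion fun i => (θ i).1) then 1 else 0) := by
    intro x
    have : ∀ t, 1 - p * shareInd x (θ t) =
        p * (if Disjoint x.1 (θ t).1 then 1 else 0) + (1 - p) := fun t => by
      rw [shareInd_eq]; ring
    simp_rw [this]
    rw [Finset.prod_add]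
    refine Finset.sum_congr rfl fun B hB => ?_
    rw [Finset.prod_mul_distrib, Finset.prod_const, Finset.prod_const,
      Finset.card_sdiff_of_subset (Finset.mem_powerset.1 hB), Finset.prod_ite_zero]
    simp only [Finset.prod_const_one, Finset.disjoint_biUnion_right]
    ring
  simp_rw [h1]
  rw [Finset.sum_comm]
  simp_rw [← Finset.mul_sum, sum_disjoint_keyRing]

theorem half_mul_le_one_sub_exp_neg {z : ℝ} (h0 : 0 ≤ z) (h1 : z ≤ 1) :
    z / 2 ≤ 1 - Real.exp (-z) := by
  have h : 1 + z ≤ Real.exp z := by linarith [Real.add_one_le_exp z]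
  have h2 : Real.exp (-z) ≤ (1 + z)⁻¹ := by
    rw [Real.exp_neg]
    exact inv_anti₀ (by linarith) h
  have h3 : (1 + z)⁻¹ ≤ 1 - z / 2 := by
    rw [inv_le_iff_one_le_mul₀ (by linarith)]
    nlinarith
  linarith

theorem psf_mul_le_one_sub_exp {K P : ℕ} (hK : 0 < K) (hKP : K ≤ P) {lam : ℝ} (hl0 : 0 ≤ lam)
    (hl1 : lam ≤ 1) : lam / 2 * psf K P ≤ 1 - Real.exp (-(lam * ((K : ℝ) * K / P))) := by
  have h0 := psf_nonneg hKP
  have h1 := psf_le_one (K := K) (P := P)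
  have h2 := psf_le hK hKP
  have h3 := half_mul_le_one_sub_exp_neg (z := lam * psf K P) (by positivity) (by nlinarith)
  have h4 : Real.exp (-(lam * ((K : ℝ) * K / P))) ≤ Real.exp (-(lam * psf K P)) :=
    Real.exp_le_exp.2 (by nlinarith)
  linarith

theorem card_biUnion_keyRing_le {n K P : ℕ} (B : Finset (Fin n)) (θ : Fin n → KeyRing P K) :
    (B.biUnion fun i => (θ i).1).card ≤ P := by
  simpa using Finset.card_le_univ (B.biUnion fun i => (θ i).1)

theorem sum_powerset_binomial {ι : Type*} (p a : ℝ) (T : Finset ι) :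
    ∑ B ∈ T.powerset, p ^ B.card * (1 - p) ^ (T.card - B.card) * a ^ B.card =
      (p * a + (1 - p)) ^ T.card := by
  rw [← Finset.sum_pow_mul_eq_add_pow]
  exact Finset.sum_congr rfl fun B _ => by rw [mul_pow]; ring

/-- Probability that a fresh vertex has no neighbour in a large set `T`. -/
theorem sum_prod_le_of_goodRings {n K P : ℕ} (p : ℝ) (hp0 : 0 ≤ p) (hp1 : p ≤ 1) (hK : 0 < K)
    (hKP : K ≤ P) {ε lam mu : ℝ} (hl0 : 0 ≤ lam) (hl1 : lam ≤ 1)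
    (T : Finset (Fin n)) (θ : Fin n → KeyRing P K) (hgood : GoodRings (Jarr n K P ε lam mu) T θ) :
    ∑ x, ∏ t ∈ T, (1 - p * shareInd x (θ t)) ≤ Fintype.card (KeyRing P K) *
      (Real.exp (-(lam / 2 * (p * psf K P) * T.card)) +
        if T.card ≤ rn n K P then 0 else Real.exp (-(mu * K))) := by
  have hP : (0 : ℝ) < P := by exact_mod_cast (by omega : 0 < P)
  have hN := card_keyRing_pos hKP
  set y : ℝ := (K : ℝ) * K / P with hy
  set η : ℝ := if T.card ≤ rn n K P then 0 else Real.exp (-(mu * K)) with hη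
  have hη0 : 0 ≤ η := by rw [hη]; split_ifs <;> positivity
  have hterm : ∀ B ∈ T.powerset, ((P - (B.biUnion fun i => (θ i).1).card).choose K : ℝ) ≤
      Fintype.card (KeyRing P K) * (Real.exp (-(lam * y)) ^ B.card + η) := by
    intro B hB
    have hBT := Finset.mem_powerset.1 hB
    set u := (B.biUnion fun i => (θ i).1).card with hu
    refine (choose_sub_le_mul_exp P K u (by omega) (card_biUnion_keyRing_le B θ)).trans ?_
    rw [card_keyRing] at *
    refine mul_le_mul_of_nonneg_left ?_ hN.le
    have hsmall : lam * K * B.card ≤ u →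
        Real.exp (-((u : ℝ) * K / P)) ≤ Real.exp (-(lam * y)) ^ B.card + η := by
      intro h
      rw [← Real.exp_nat_mul]
      refine le_add_of_le_of_nonneg (Real.exp_le_exp.2 ?_) hη0
      have : lam * K * B.card * K / P ≤ u * K / P := by gcongr
      have e : (B.card : ℝ) * -(lam * y) = -(lam * K * B.card * K / P) := by rw [hy]; ring
      rw [e]
      linarith
    rcases Nat.lt_or_ge B.card 2 with hlt | hge
    · refine hsmall ?_
      rcases Nat.lt_or_ge B.card 1 with h | h
      · have : B.card = 0 := by omega
        simp [this]
      · have h1 : B.card = 1 := by omega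
        obtain ⟨a, rfl⟩ := Finset.card_eq_one.1 h1
        have : u = K := by simp [hu, (θ a).2]
        rw [this]
        simp only [Finset.card_singleton, Nat.cast_one, mul_one]
        exact mul_le_of_le_one_left (Nat.cast_nonneg _) hl1
    · have hg := hgood B hBT hge
      rw [← hu] at hg
      unfold Jarr at hg
      split_ifs at hg with hr
      · exact hsmall (Nat.lt_of_floor_lt (lt_of_le_of_lt (le_max_right _ _) hg)).le
      · have h1 : mu * P ≤ u := (Nat.lt_of_floor_lt hg).le
        have h2 : ¬ T.card ≤ rn n K P := by
          have := Finset.card_le_card hBT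
          omega
        rw [hη, if_neg h2]
        refine le_add_of_nonneg_of_le (by positivity) (Real.exp_le_exp.2 ?_)
        rw [neg_le_neg_iff, le_div_iff₀ hP]
        nlinarith [(Nat.cast_nonneg K : (0 : ℝ) ≤ K)]
  rw [sum_prod_one_sub_shareInd]
  have hw : ∀ B : Finset (Fin n), 0 ≤ p ^ B.card * (1 - p) ^ (T.card - B.card) := fun B =>
    mul_nonneg (pow_nonneg hp0 _) (pow_nonneg (by linarith) _)
  refine (Finset.sum_le_sum fun B hB => mul_le_mul_of_nonneg_left (hterm B hB) (hw B)).trans ?_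
  have h1 := sum_powerset_binomial p 1 T
  have h2 := sum_powerset_binomial p (Real.exp (-(lam * y))) T
  simp only [one_pow, mul_one, add_sub_cancel] at h1
  have e : ∑ B ∈ T.powerset, p ^ B.card * (1 - p) ^ (T.card - B.card) *
      (Fintype.card (KeyRing P K) * (Real.exp (-(lam * y)) ^ B.card + η)) =
      Fintype.card (KeyRing P K) *
        ((∑ B ∈ T.powerset, p ^ B.card * (1 - p) ^ (T.card - B.card) *
          Real.exp (-(lam * y)) ^ B.card) +
        (∑ B ∈ T.powerset, p ^ B.card * (1 - p) ^ (T.card - B.card)) * η) := by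
    rw [Finset.sum_mul, ← Finset.sum_add_distrib, Finset.mul_sum]
    exact Finset.sum_congr rfl fun B _ => by ring
  rw [e, h1, h2, one_mul]
  refine mul_le_mul_of_nonneg_left (add_le_add ?_ le_rfl) hN.le
  have h3 := psf_mul_le_one_sub_exp hK hKP hl0 hl1
  rw [← hy] at h3
  have h4 : p * Real.exp (-(lam * y)) + (1 - p) ≤ Real.exp (-(lam / 2 * (p * psf K P))) := by
    have := Real.add_one_le_exp (-(lam / 2 * (p * psf K P)))
    nlinarith [mul_le_mul_of_nonneg_left h3 hp0]
  refine (pow_le_pow_left₀ (by have := Real.exp_pos (-(lam * y)); nlinarith) h4 _).trans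
    (le_of_eq ?_)
  rw [← Real.exp_nat_mul]
  congr 1
  ring

/-- Probability that a fresh vertex has no neighbour in a set `T` with at least two elements. -/
theorem sum_prod_le_of_pair {n K P : ℕ} (p : ℝ) (hp0 : 0 ≤ p) (hp1 : p ≤ 1) (hK : 0 < K)
    (hKP : K ≤ P) {ε lam mu : ℝ} (hr : 2 ≤ rn n K P) (T : Finset (Fin n)) (hT : 2 ≤ T.card)
    (θ : Fin n → KeyRing P K) (hgood : GoodRings (Jarr n K P ε lam mu) T θ) :
    ∑ x, ∏ t ∈ T, (1 - p * shareInd x (θ t)) ≤ Fintype.card (KeyRing P K) *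
      (1 - 2 * (p * psf K P) + p ^ 2 *
        (2 * psf K P - 1 + min (1 - psf K P) (Real.exp (-((1 + ε) * ((K : ℝ) * K / P)))))) := by
  have hP : (0 : ℝ) < P := by exact_mod_cast (by omega : 0 < P)
  have hN := card_keyRing_pos hKP
  obtain ⟨B, hBT, hB⟩ := Finset.exists_subset_card_eq hT
  have hfac0 : ∀ x y : KeyRing P K, 0 ≤ 1 - p * shareInd x y := fun x y => by
    nlinarith [shareInd_nonneg x y, shareInd_le_one x y]
  have hfac1 : ∀ x y : KeyRing P K, 1 - p * shareInd x y ≤ 1 := fun x y => by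
    nlinarith [shareInd_nonneg x y, mul_nonneg hp0 (shareInd_nonneg x y)]
  have hmono : ∑ x, ∏ t ∈ T, (1 - p * shareInd x (θ t)) ≤
      ∑ x, ∏ t ∈ B, (1 - p * shareInd x (θ t)) := by
    refine Finset.sum_le_sum fun x _ => ?_
    exact Finset.prod_le_prod_of_subset_of_le_one hBT (fun _ _ => hfac0 _ _)
      (fun _ _ _ => hfac1 _ _)
  refine hmono.trans ?_
  have hg := hgood B hBT hB.ge
  rw [hB, Jarr, if_pos hr] at hg
  obtain ⟨a, c, hac, rfl⟩ := Finset.card_eq_two.1 hB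
  set u := (({a, c} : Finset (Fin n)).biUnion fun i => (θ i).1) with hu
  have hu1 : (1 + ε) * K ≤ u.card := (Nat.lt_of_floor_lt (lt_of_le_of_lt (le_max_left _ _) hg)).le
  have hsub : (θ a).1 ⊆ u := Finset.subset_biUnion_of_mem (fun i => (θ i).1) (by simp)
  have hQ : ((P - u.card).choose K : ℝ) ≤ Fintype.card (KeyRing P K) *
      min (1 - psf K P) (Real.exp (-((1 + ε) * ((K : ℝ) * K / P)))) := by
    rw [mul_min_of_nonneg _ _ hN.le, le_min_iff]
    constructor
    · rw [← choose_sub_eq_psf hKP]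
      have := Finset.card_le_card hsub
      rw [(θ a).2] at this
      exact_mod_cast Nat.choose_le_choose K (by omega)
    · refine (choose_sub_le_mul_exp P K u.card (by omega) (card_biUnion_keyRing_le _ θ)).trans ?_
      rw [card_keyRing]
      refine mul_le_mul_of_nonneg_left (Real.exp_le_exp.2 ?_) (Nat.cast_nonneg _)
      have : (1 + ε) * K * K / P ≤ u.card * K / P := by gcongr
      have e : (1 + ε) * ((K : ℝ) * K / P) = (1 + ε) * K * K / P := by ring
      rw [e]
      linarith
  have hexp : ∑ x, ∏ t ∈ ({a, c} : Finset (Fin n)), (1 - p * shareInd x (θ t)) =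
      Fintype.card (KeyRing P K) * (1 - 2 * (p * psf K P) + p ^ 2 * (2 * psf K P - 1)) +
        p ^ 2 * ((P - u.card).choose K : ℝ) := by
    have e : ∀ x, ∏ t ∈ ({a, c} : Finset (Fin n)), (1 - p * shareInd x (θ t)) =
        1 - p * shareInd x (θ a) - p * shareInd x (θ c) + p ^ 2 * (shareInd x (θ a) +
          shareInd x (θ c) - 1 + if Disjoint x.1 u then (1 : ℝ) else 0) := by
      intro x
      rw [Finset.prod_pair hac]
      have : Disjoint x.1 u ↔ Disjoint x.1 (θ a).1 ∧ Disjoint x.1 (θ c).1 := by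
        rw [hu, Finset.disjoint_biUnion_right]
        simp
      rw [shareInd_eq, shareInd_eq]
      by_cases h1 : Disjoint x.1 (θ a).1 <;> by_cases h2 : Disjoint x.1 (θ c).1 <;>
        simp only [this, h1, h2, and_self, and_true, and_false, if_true, if_false] <;> ring
    simp_rw [e]
    simp only [Finset.sum_add_distrib, Finset.sum_sub_distrib, ← Finset.mul_sum,
      sum_shareInd hKP, sum_disjoint_keyRing]
    simp only [Finset.sum_const, Finset.card_univ, nsmul_eq_mul]
    ring
  rw [hexp]
  nlinarith [mul_le_mul_of_nonneg_left hQ (sq_nonneg p)]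

theorem pair_bound_le_exp {K P : ℕ} {p ε : ℝ} (hp0 : 0 ≤ p) (hp1 : p ≤ 1) (hK : 0 < K)
    (hKP : K ≤ P) (hε0 : 0 < ε) (hε1 : ε < 1)
    (hsmall : 2 * (p * psf K P) < 1 - Real.exp (-(ε / 6))) :
    1 - 2 * (p * psf K P) + p ^ 2 *
      (2 * psf K P - 1 + min (1 - psf K P) (Real.exp (-((1 + ε) * ((K : ℝ) * K / P))))) ≤
    Real.exp (-((1 + ε / 2) * (p * psf K P))) := by
  have hs0 := psf_nonneg hKP
  have hsy := psf_le hK hKP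
  have hys := one_sub_exp_le_psf hK hKP
  set s := psf K P
  set y : ℝ := (K : ℝ) * K / P
  refine le_trans ?_ (Real.one_sub_le_exp_neg _)
  have hps : 0 ≤ p * s := mul_nonneg hp0 hs0
  rcases le_total p (1 / 2) with hp | hp
  · have h1 := min_le_left (1 - s) (Real.exp (-((1 + ε) * y)))
    have h2 : p ^ 2 * (2 * s - 1 + min (1 - s) (Real.exp (-((1 + ε) * y)))) ≤ p ^ 2 * s :=
      mul_le_mul_of_nonneg_left (by linarith) (sq_nonneg p)
    have h3 : p ^ 2 * s ≤ 1 / 2 * (p * s) := by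
      rw [sq, mul_assoc]
      exact mul_le_mul_of_nonneg_right hp hps
    nlinarith
  · have hy0 : 0 ≤ y := by positivity
    have hy : y ≤ ε / 6 := by
      by_contra! h
      have h1 : Real.exp (-y) ≤ Real.exp (-(ε / 6)) := Real.exp_le_exp.2 (by linarith)
      nlinarith
    have h1 := min_le_right (1 - s) (Real.exp (-((1 + ε) * y)))
    set z := (1 + ε) * y with hz
    have hz0 : 0 ≤ z := by positivity
    have h2 : Real.exp (-z) ≤ (1 + z)⁻¹ := by
      rw [Real.exp_neg]
      exact inv_anti₀ (by linarith) (by linarith [Real.add_one_le_exp z])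
    have h3 : (1 + z)⁻¹ ≤ 1 - (1 + ε / 2) * y := by
      rw [inv_le_iff_one_le_mul₀ (by linarith)]
      have hz2 : (1 + ε / 2) * z ≤ ε / 2 := by
        rw [hz]
        nlinarith
      nlinarith
    have h4 : 2 * s - 1 + min (1 - s) (Real.exp (-z)) ≤ (1 - ε / 2) * s := by nlinarith
    have h5 : p ^ 2 * (2 * s - 1 + min (1 - s) (Real.exp (-z))) ≤ p ^ 2 * ((1 - ε / 2) * s) :=
      mul_le_mul_of_nonneg_left h4 (sq_nonneg p)
    have h6 : p ^ 2 * ((1 - ε / 2) * s) ≤ (1 - ε / 2) * (p * s) := by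
      have : p * (p * s) ≤ 1 * (p * s) := mul_le_mul_of_nonneg_right hp1 hps
      nlinarith
    nlinarith

theorem exp_neg_add_le_max {x w : ℝ} (hw : 2 ≤ w) (hwx : Real.exp (-w) ≤ x / 4) :
    Real.exp (-x) + Real.exp (-w) ≤ max (Real.exp (-(x / 4))) (Real.exp (-(w / 2))) := by
  have hx0 : 0 < x := by have := Real.exp_pos (-w); linarith
  rcases le_total x 1 with hx | hx
  · refine le_max_of_le_left ?_
    have h1 := half_mul_le_one_sub_exp_neg hx0.le hx
    have h2 := Real.one_sub_le_exp_neg (x / 4)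
    linarith
  · have h1 : 2 * Real.exp (-x) ≤ Real.exp (-(x / 4)) := by
      have e : Real.exp (-(x / 4)) = Real.exp (3 / 4 * x) * Real.exp (-x) := by
        rw [← Real.exp_add]; congr 1; ring
      rw [e]
      refine mul_le_mul_of_nonneg_right ?_ (Real.exp_pos _).le
      have := Real.quadratic_le_exp_of_nonneg (show 0 ≤ 3 / 4 * x by linarith)
      nlinarith
    have h2 : 2 * Real.exp (-w) ≤ Real.exp (-(w / 2)) := by
      have e : Real.exp (-(w / 2)) = Real.exp (w / 2) * Real.exp (-w) := by
        rw [← Real.exp_add]; congr 1; ring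
      rw [e]
      refine mul_le_mul_of_nonneg_right ?_ (Real.exp_pos _).le
      linarith [Real.add_one_le_exp (w / 2)]
    rcases le_total (Real.exp (-x)) (Real.exp (-w)) with h | h
    · exact le_max_of_le_right (by linarith)
    · exact le_max_of_le_left (by linarith)

theorem large_bound_le_max {n K P r : ℕ} {e lam mu σ : ℝ} (hK : 0 < K)
    (hlam : 0 < lam) (hmu : 0 < mu) (hP : σ * n ≤ P) (he0 : 0 ≤ e)
    (hmuK : 2 ≤ mu * K) (hr : r ≤ n / 2) (hL : 8 ≤ lam * σ * mu * (n * e)) :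
    Real.exp (-(lam / 2 * e * r)) + (if r ≤ rn n K P then 0 else Real.exp (-(mu * K))) ≤
      max (Real.exp (-(lam / 8 * e * r))) (Real.exp (-(mu / 2 * K))) := by
  have e1 : lam / 8 * e * r = lam / 2 * e * r / 4 := by ring
  have e2 : mu / 2 * K = mu * K / 2 := by ring
  rw [e1, e2]
  have hKpos : (0 : ℝ) < K := by exact_mod_cast hK
  split_ifs with h
  · rw [add_zero]
    refine le_max_of_le_left (Real.exp_le_exp.2 ?_)
    have : 0 ≤ lam / 2 * e * r := by positivity
    linarith
  · refine exp_neg_add_le_max hmuK ?_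
    have hrPK : (P : ℝ) ≤ r * K := by
      have h1 : P / K < r := by unfold rn at h; omega
      have h2 := (Nat.div_lt_iff_lt_mul hK).1 h1
      exact_mod_cast h2.le
    have h1 : Real.exp (-(mu * K)) ≤ (mu * K)⁻¹ := by
      rw [Real.exp_neg]
      exact inv_anti₀ (by positivity) (by linarith [Real.add_one_le_exp (mu * K)])
    refine h1.trans ?_
    rw [inv_le_iff_one_le_mul₀ (by positivity)]
    have h2 : e * (σ * n) ≤ e * (r * K) := mul_le_mul_of_nonneg_left (hP.trans hrPK) he0
    have h3 : lam * mu * (e * (σ * n)) ≤ lam * mu * (e * (r * K)) :=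
      mul_le_mul_of_nonneg_left h2 (by positivity)
    nlinarith

theorem choose_mul_le {n r ℓ : ℕ} {e L : ℝ} (he0 : 0 ≤ e) (hL : 1 ≤ 2 * L)
    (hnE : n * e ≤ 2 * L) (hr : 1 ≤ r) :
    (n.choose r : ℝ) * ((n.choose ℓ : ℝ) * ((r : ℝ) * ((r : ℝ) ^ (r + ℓ - 1) *
      e ^ (r + ℓ - 1)))) ≤ n * (2 * Real.exp 1 * 2 ^ ℓ * L) ^ (r + ℓ) := by
  obtain ⟨m, hm⟩ : ∃ m, r + ℓ = m + 1 := ⟨r + ℓ - 1, by omega⟩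
  have hm' : r + ℓ - 1 = m := by omega
  have h1 : (n.choose r : ℝ) ≤ (n : ℝ) ^ r / r.factorial := Nat.choose_le_pow_div r n
  have h2 : (n.choose ℓ : ℝ) ≤ (n : ℝ) ^ ℓ := by exact_mod_cast Nat.choose_le_pow n ℓ
  have h3 : (r : ℝ) ^ r / r.factorial ≤ Real.exp 1 ^ r := by
    rw [← Real.exp_nat_mul, mul_one]
    exact Real.pow_div_factorial_le_exp _ (Nat.cast_nonneg r) r
  have h4 : (r : ℝ) ^ ℓ ≤ (2 ^ ℓ) ^ r := by
    rw [← pow_mul, mul_comm, pow_mul]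
    exact pow_le_pow_left₀ (Nat.cast_nonneg r) (by exact_mod_cast Nat.lt_two_pow_self.le) ℓ
  have h5 : (n * e) ^ m ≤ (2 * L) ^ (m + 1) :=
    (pow_le_pow_left₀ (by positivity) hnE m).trans (pow_le_pow_right₀ hL (Nat.le_succ m))
  have h6 : (Real.exp 1 * 2 ^ ℓ) ^ r ≤ (Real.exp 1 * 2 ^ ℓ) ^ (r + ℓ) := by
    refine pow_le_pow_right₀ ?_ (Nat.le_add_right _ _)
    have := Real.add_one_le_exp 1
    have h2 : (1 : ℝ) ≤ 2 ^ ℓ := one_le_pow₀ (by norm_num)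
    nlinarith
  rw [hm']
  calc _ ≤ (n : ℝ) ^ r / r.factorial * ((n : ℝ) ^ ℓ * ((r : ℝ) * ((r : ℝ) ^ m * e ^ m))) := by
        gcongr
    _ = (n : ℝ) ^ (r + ℓ) * ((r : ℝ) ^ (m + 1) / r.factorial) * e ^ m := by ring
    _ = n * (n * e) ^ m * ((r : ℝ) ^ r / r.factorial * (r : ℝ) ^ ℓ) := by
        rw [← hm, pow_add (r : ℝ) r ℓ, hm, mul_pow]; ring
    _ ≤ n * (2 * L) ^ (m + 1) * (Real.exp 1 ^ r * (2 ^ ℓ) ^ r) := by gcongr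
    _ ≤ n * (2 * L) ^ (m + 1) * (Real.exp 1 * 2 ^ ℓ) ^ (r + ℓ) := by
        rw [← mul_pow]
        exact mul_le_mul_of_nonneg_left h6 (by positivity)
    _ = _ := by rw [← hm, mul_assoc, ← mul_pow]; congr 2; ring

theorem small_term_le {n r ℓ R : ℕ} {e L A ε : ℝ} (hn : (n : ℝ) = Real.exp L) (hr : r ≤ R)
    (hrn : r + ℓ ≤ n) (hA : 1 ≤ A) (he0 : 0 ≤ e) (hLe : L ≤ n * e) (hε0 : 0 < ε) (hε1 : ε < 1)
    (heR : e * (R + ℓ) ≤ 1 / 2) :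
    n * A ^ (r + ℓ) * Real.exp (-((1 + ε / 2) * e)) ^ (n - r - ℓ) ≤
      Real.exp 1 * (A ^ (R + ℓ) * Real.exp (-(ε / 2 * L))) := by
  have h1 : A ^ (r + ℓ) ≤ A ^ (R + ℓ) := pow_le_pow_right₀ hA (by omega)
  have hrR : (r : ℝ) ≤ R := by exact_mod_cast hr
  have h2 : n * Real.exp (-((1 + ε / 2) * e)) ^ (n - r - ℓ) ≤
      Real.exp 1 * Real.exp (-(ε / 2 * L)) := by
    rw [← Real.exp_nat_mul, hn, ← Real.exp_add, ← Real.exp_add, Nat.sub_sub, Nat.cast_sub hrn]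
    push_cast
    refine Real.exp_le_exp.2 ?_
    have h3 : e * (r + ℓ) ≤ 1 / 2 := by nlinarith
    nlinarith
  calc _ = A ^ (r + ℓ) * (n * Real.exp (-((1 + ε / 2) * e)) ^ (n - r - ℓ)) := by ring
    _ ≤ A ^ (R + ℓ) * (Real.exp 1 * Real.exp (-(ε / 2 * L))) := by gcongr
    _ = _ := by ring

theorem large_term_le {n r ℓ R : ℕ} {e L A lam c : ℝ} (hn : (n : ℝ) = Real.exp L) (hr : R < r)
    (hℓR : ℓ ≤ R) (hrn : r ≤ n / 2) (hn6 : 6 * ℓ ≤ n) (hA : 1 ≤ A) (he0 : 0 ≤ e) (hL0 : 0 ≤ L)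
    (hLe : L ≤ n * e) (hlam : 0 < lam) (hR : 144 ≤ lam * R) (hAL : Real.log A ≤ lam / 96 * L)
    (hAc : Real.log A + 3 ≤ c / 3) :
    n * A ^ (r + ℓ) * max (Real.exp (-(lam / 8 * e * r))) (Real.exp (-c)) ^ (n - r - ℓ) ≤
      Real.exp (-(2 * L)) := by
  have hA0 : 0 < A := by linarith
  have hlogA : 0 ≤ Real.log A := Real.log_nonneg hA
  have hexpA : A ^ (r + ℓ) = Real.exp ((r + ℓ) * Real.log A) := by
    rw [← Real.exp_log hA0, ← Real.exp_nat_mul, Real.exp_log hA0]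
    push_cast
    rfl
  have hm : (n : ℝ) / 3 ≤ ((n - r - ℓ : ℕ) : ℝ) := by
    rw [div_le_iff₀ (by norm_num)]
    exact_mod_cast (by omega : n ≤ (n - r - ℓ) * 3)
  set m := n - r - ℓ
  have hrR : (R : ℝ) ≤ r := by exact_mod_cast hr.le
  have hℓr : (ℓ : ℝ) ≤ r := by exact_mod_cast hℓR.trans hr.le
  have hLn : L ≤ n := by
    rw [hn]; linarith [Real.add_one_le_exp L]
  have hrℓn : (r : ℝ) + ℓ ≤ n := by exact_mod_cast (by omega : r + ℓ ≤ n)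
  have hr0 : (0 : ℝ) ≤ r := Nat.cast_nonneg r
  rcases le_total (Real.exp (-(lam / 8 * e * r))) (Real.exp (-c)) with h | h
  · rw [max_eq_right h, ← Real.exp_nat_mul, hexpA]
    nth_rewrite 1 [hn]
    rw [← Real.exp_add, ← Real.exp_add]
    refine Real.exp_le_exp.2 ?_
    have h1 : ((r : ℝ) + ℓ) * Real.log A ≤ n * Real.log A :=
      mul_le_mul_of_nonneg_right hrℓn hlogA
    have h2 : (n : ℝ) / 3 * c ≤ m * c := mul_le_mul_of_nonneg_right hm (by linarith)
    have h3 : (n : ℝ) * (Real.log A + 3) ≤ n * (c / 3) :=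
      mul_le_mul_of_nonneg_left hAc (Nat.cast_nonneg n)
    nlinarith
  · rw [max_eq_left h, ← Real.exp_nat_mul, hexpA]
    nth_rewrite 1 [hn]
    rw [← Real.exp_add, ← Real.exp_add]
    refine Real.exp_le_exp.2 ?_
    have h1 : ((r : ℝ) + ℓ) * Real.log A ≤ (2 * r) * (lam / 96 * L) :=
      mul_le_mul (by linarith) hAL hlogA (by positivity)
    have h2 : (n : ℝ) / 3 * (lam / 8 * e * r) ≤ m * (lam / 8 * e * r) :=
      mul_le_mul_of_nonneg_right hm (by positivity)
    have h3 : lam / 24 * r * L ≤ lam / 24 * r * (n * e) :=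
      mul_le_mul_of_nonneg_left hLe (by positivity)
    have h4 : 144 * L ≤ lam * r * L :=
      mul_le_mul_of_nonneg_right (hR.trans (mul_le_mul_of_nonneg_left hrR hlam.le)) hL0
    nlinarith

theorem measureReal_conn_eq_le_of_bounds {n K P ℓ R : ℕ} {p ε lam mu σ L : ℝ} (hp0 : 0 ≤ p)
    (hp1 : p ≤ 1) (hK : 0 < K) (hKP : 2 * K ≤ P) (hε0 : 0 < ε) (hε1 : ε < 1) (hlam0 : 0 < lam)
    (hlam1 : lam ≤ 1) (hmu : 0 < mu) (hP : σ * n ≤ P) (hn4 : 4 ≤ n) (hn6 : 6 * ℓ ≤ n)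
    (hnL : (n : ℝ) = Real.exp L) (hL1 : 1 ≤ L) (hLe : L ≤ n * (p * psf K P))
    (heL : n * (p * psf K P) ≤ 2 * L)
    (hsmall : 2 * (p * psf K P) < 1 - Real.exp (-(ε / 6)))
    (heR : p * psf K P * (R + ℓ) ≤ 1 / 2) (hℓR : ℓ ≤ R) (hR : 144 ≤ lam * R)
    (hmuK : 2 ≤ mu * K) (hL8 : 8 ≤ lam * σ * mu * (n * (p * psf K P)))
    (hAL : Real.log (2 * Real.exp 1 * 2 ^ ℓ * L) ≤ lam / 96 * L)
    (hAK : Real.log (2 * Real.exp 1 * 2 ^ ℓ * L) + 3 ≤ mu / 2 * K / 3) :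
    (gonMeasure n K P p).real ({ω | vertexConn (gonGraph ω) = ℓ} ∩
      {ω | ℓ < minDeg (gonGraph ω)} ∩ (EJ n K P ε lam mu)ᶜ) ≤
    (R + 1) * (Real.exp 1 * ((2 * Real.exp 1 * 2 ^ ℓ * L) ^ (R + ℓ) * Real.exp (-(ε / 2 * L)))) +
      Real.exp (-L) := by
  have hKP' : K ≤ P := by omega
  have hN := card_keyRing_pos hKP'
  have : Nonempty (KeyRing P K) := Fintype.card_pos_iff.1 (by exact_mod_cast hN)
  have hs0 := psf_nonneg hKP'
  have hrn : 2 ≤ rn n K P :=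
    le_min ((Nat.le_div_iff_mul_le hK).2 hKP) ((Nat.le_div_iff_mul_le two_pos).2 hn4)
  set e := p * psf K P with he
  have he0 : 0 ≤ e := mul_nonneg hp0 hs0
  set A := 2 * Real.exp 1 * 2 ^ ℓ * L with hAdef
  have hA : 1 ≤ A := by
    have h1 : (1 : ℝ) ≤ 2 ^ ℓ := one_le_pow₀ (by norm_num)
    have h2 : 1 ≤ 2 * Real.exp 1 := by linarith [Real.add_one_le_exp 1]
    exact one_le_mul_of_one_le_of_one_le (one_le_mul_of_one_le_of_one_le h2 h1) hL1
  set b₁ := Real.exp (-((1 + ε / 2) * e)) with hb₁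
  set b₂ : ℕ → ℝ := fun r =>
    max (Real.exp (-(lam / 8 * e * r))) (Real.exp (-(mu / 2 * K))) with hb₂
  have hb₁0 : 0 ≤ b₁ := (Real.exp_pos _).le
  have hb₂0 : ∀ r, 0 ≤ b₂ r := fun r => le_max_of_le_left (Real.exp_pos _).le
  set M := Real.exp 1 * (A ^ (R + ℓ) * Real.exp (-(ε / 2 * L))) with hM
  have hM0 : 0 ≤ M := by positivity
  refine (measureReal_conn_eq_le (n := n) (K := K) (P := P) (ℓ := ℓ) p hp0 hp1 ε lam mu
    (by omega) (psf K P) (fun r => min b₁ (b₂ r)) (fun y => (sum_shareInd hKP' y).le) hs0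
    (fun r => le_min hb₁0 (hb₂0 r)) ?_).trans ?_
  · intro T hT hTn θ hgood
    rcases le_total b₁ (b₂ T.card) with h | h
    · simp only [min_eq_left h]
      refine (sum_prod_le_of_pair p hp0 hp1 hK hKP' hrn T hT θ hgood).trans ?_
      exact mul_le_mul_of_nonneg_left
        (pair_bound_le_exp hp0 hp1 hK hKP' hε0 hε1 hsmall) hN.le
    · simp only [min_eq_right h]
      refine (sum_prod_le_of_goodRings p hp0 hp1 hK hKP' hlam0.le hlam1 T θ hgood).trans ?_
      exact mul_le_mul_of_nonneg_left
        (large_bound_le_max hK hlam0 hmu hP he0 hmuK hTn hL8) hN.le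
  · have hterm : ∀ r ∈ Finset.Icc 2 (n / 2), (n.choose r : ℝ) * ((n.choose ℓ : ℝ) * ((r : ℝ) *
        ((r : ℝ) ^ (r + ℓ - 1) * (e ^ (r + ℓ - 1) * min b₁ (b₂ r) ^ (n - r - ℓ))))) ≤
        (if r ∈ Finset.range (R + 1) then M else 0) + Real.exp (-(2 * L)) := by
      intro r hr
      rw [Finset.mem_Icc] at hr
      have hc := choose_mul_le (n := n) (r := r) (ℓ := ℓ) he0 (by linarith) heL (by omega)
      rw [← hAdef] at hc
      have hnA : 0 ≤ n * A ^ (r + ℓ) := by positivity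
      have hmin0 : 0 ≤ min b₁ (b₂ r) := le_min hb₁0 (hb₂0 r)
      calc _ = (n.choose r : ℝ) * ((n.choose ℓ : ℝ) * ((r : ℝ) * ((r : ℝ) ^ (r + ℓ - 1) *
            e ^ (r + ℓ - 1)))) * min b₁ (b₂ r) ^ (n - r - ℓ) := by ring
        _ ≤ n * A ^ (r + ℓ) * min b₁ (b₂ r) ^ (n - r - ℓ) :=
          mul_le_mul_of_nonneg_right hc (by positivity)
        _ ≤ _ := ?_
      rcases le_or_gt r R with h | h
      · rw [if_pos (Finset.mem_range.2 (by omega))]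
        have h1 := small_term_le hnL h (by omega) hA he0 hLe hε0 hε1 heR
        have h2 : n * A ^ (r + ℓ) * min b₁ (b₂ r) ^ (n - r - ℓ) ≤
            n * A ^ (r + ℓ) * b₁ ^ (n - r - ℓ) :=
          mul_le_mul_of_nonneg_left (pow_le_pow_left₀ hmin0 (min_le_left _ _) _) hnA
        linarith [Real.exp_pos (-(2 * L))]
      · rw [if_neg (by simpa using h), zero_add]
        have h1 := large_term_le hnL h hℓR hr.2 hn6 hA he0 (by linarith) hLe hlam0 hR hAL hAK
        exact (mul_le_mul_of_nonneg_left
          (pow_le_pow_left₀ hmin0 (min_le_right _ _) _) hnA).trans h1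
    refine (Finset.sum_le_sum hterm).trans ?_
    rw [Finset.sum_add_distrib]
    refine add_le_add ?_ ?_
    · rw [← Finset.sum_filter, Finset.sum_const, nsmul_eq_mul]
      refine mul_le_mul_of_nonneg_right ?_ hM0
      have : (Finset.filter (· ∈ Finset.range (R + 1)) (Finset.Icc 2 (n / 2))).card ≤ R + 1 := by
        refine (Finset.card_le_card fun x hx => (Finset.mem_filter.1 hx).2).trans ?_
        simp
      exact_mod_cast this
    · rw [Finset.sum_const, nsmul_eq_mul, Nat.card_Icc]
      have h1 : ((n / 2 + 1 - 2 : ℕ) : ℝ) ≤ n := by exact_mod_cast (by omega)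
      calc _ ≤ n * Real.exp (-(2 * L)) := mul_le_mul_of_nonneg_right h1 (Real.exp_pos _).le
        _ = Real.exp (-L) := by rw [hnL, ← Real.exp_add]; congr 1; ring

theorem eventually_log_mul_add_le_mul_sqrt {C c : ℝ} (a : ℝ) (hC : 0 < C) (hc : 0 < c) :
    ∀ᶠ x : ℝ in atTop, Real.log (C * x) + a ≤ c * √x := by
  have h1 : (fun x : ℝ => Real.log x + (Real.log C + a)) =o[atTop]
      fun x : ℝ => x ^ (1 / 2 : ℝ) := by
    refine (isLittleO_log_rpow_atTop (by norm_num)).add ?_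
    refine isLittleO_const_left.2 (Or.inr ?_)
    exact tendsto_norm_atTop_atTop.comp (tendsto_rpow_atTop (by norm_num))
  filter_upwards [h1.bound hc, eventually_gt_atTop 0] with x hx hx0
  rw [Real.log_mul hC.ne' hx0.ne', Real.sqrt_eq_rpow]
  rw [Real.norm_of_nonneg (Real.rpow_nonneg hx0.le _)] at hx
  linarith [le_trans (le_abs_self _) hx]

theorem mul_log_le_keyRing_sq {n K P : ℕ} {p σ L : ℝ} (hp1 : p ≤ 1) (hσ : 0 < σ)
    (hK : 0 < K) (hKP : K ≤ P) (hP : σ * n ≤ P) (hL : L ≤ n * (p * psf K P)) :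
    σ * L ≤ (K : ℝ) ^ 2 := by
  have hP0 : (0 : ℝ) < P := by exact_mod_cast hK.trans_le hKP
  have h1 : p * psf K P ≤ (K : ℝ) * K / P :=
    (mul_le_of_le_one_left (psf_nonneg hKP) hp1).trans (psf_le hK hKP)
  calc σ * L ≤ σ * (n * ((K : ℝ) * K / P)) := by gcongr; exact hL.trans (by gcongr)
    _ = σ * n / P * (K : ℝ) ^ 2 := by ring
    _ ≤ 1 * (K : ℝ) ^ 2 := by gcongr; exact (div_le_one hP0).2 hP
    _ = _ := one_mul _

theorem tendsto_const_mul_pow_mul_exp_neg (a C : ℝ) (m : ℕ) {c : ℝ} (hc : 0 < c) :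
    Tendsto (fun x : ℝ => a * (Real.exp 1 * ((C * x) ^ m * Real.exp (-(c * x)))) + Real.exp (-x))
      atTop (nhds 0) := by
  have h1 : Tendsto (fun x : ℝ => (c * x) ^ m * Real.exp (-(c * x))) atTop (nhds 0) :=
    (Real.tendsto_pow_mul_exp_neg_atTop_nhds_zero m).comp (tendsto_id.const_mul_atTop hc)
  have h2 := (h1.const_mul (a * Real.exp 1 * (C / c) ^ m)).add Real.tendsto_exp_neg_atTop_nhds_zero
  rw [mul_zero, add_zero] at h2
  refine h2.congr fun x => ?_
  have : (C * x) ^ m = (C / c) ^ m * (c * x) ^ m := by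
    rw [← mul_pow]; congr 1; field_simp
  rw [this]; ring

instance isFiniteMeasure_gonMeasure (n K P : ℕ) (p : ℝ) : IsFiniteMeasure (gonMeasure n K P p) := by
  unfold gonMeasure
  infer_instance

/-- off `𝓔(J)`, connectivity exactly `ℓ` together with minimum
degree greater than `ℓ` is asymptotically negligible. -/
theorem gon_conn_eq_ell_min_deg_gt_ell_negligible
    (ℓ : ℕ) (K P : ℕ → ℕ) (p : ℕ → ℝ) (σ : ℝ) (hσ : 0 < σ)
    (hKP : ∀ n, K n ≤ P n) (hp0 : ∀ n, 0 < p n) (hp1 : ∀ n, p n < 1)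
    (hK2 : ∀ᶠ n : ℕ in atTop, 2 ≤ K n)
    (hP : ∀ᶠ n : ℕ in atTop, σ * (n : ℝ) ≤ (P n : ℝ))
    (hKPo : Tendsto (fun n : ℕ => (K n : ℝ) / (P n : ℝ)) atTop (nhds 0))
    (β : ℕ → ℝ)
    (hβ : ∀ n : ℕ, β n =
      (n : ℝ) * pef (K n) (P n) (p n) - Real.log n - (ℓ : ℝ) * Real.log (Real.log n))
    (hβo : Tendsto (fun n : ℕ => β n / Real.log n) atTop (nhds 0))
    (hβtop : Tendsto β atTop atTop)
    (ε lam mu : ℝ) (hε0 : 0 < ε) (hε1 : ε < 1)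
    (hlam0 : 0 < lam) (hlam2 : lam < 1 / 2)
    (hlamA : 2 * lam * σ < 1)
    (hlamB : lam * (Real.exp 2 / σ) ^ (lam / (1 - 2 * lam)) < 1)
    (hmu0 : 0 < mu) (hmu2 : mu < 1 / 2)
    (hmuA : 2 * (Real.sqrt mu * (Real.exp 1 / mu) ^ mu) ^ σ < 1)
    (hmuB : Real.sqrt mu * (Real.exp 1 / mu) ^ mu < 1) :
    Tendsto (fun n : ℕ => gonMeasure n (K n) (P n) (p n)
        ({ω | vertexConn (gonGraph ω) = ℓ} ∩ {ω | ℓ < minDeg (gonGraph ω)} ∩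
          (EJ n (K n) (P n) ε lam mu)ᶜ)) atTop (nhds 0) := by
  have hlog : Tendsto (fun n : ℕ => Real.log n) atTop atTop :=
    Real.tendsto_log_atTop.comp tendsto_natCast_atTop_atTop
  obtain ⟨R, hR⟩ := exists_nat_ge (max (ℓ : ℝ) (144 / lam))
  have hℓR : ℓ ≤ R := by exact_mod_cast (le_max_left _ _).trans hR
  have hlamR : 144 ≤ lam * R := by
    rw [mul_comm, ← div_le_iff₀ hlam0]
    exact (le_max_right _ _).trans hR
  have hC : (0 : ℝ) < 2 * Real.exp 1 * 2 ^ ℓ := by positivity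
  have hnE : ∀ n : ℕ, n * (p n * psf (K n) (P n)) =
      Real.log n + ℓ * Real.log (Real.log n) + β n := by
    intro n
    rw [hβ n, pef]
    ring
  have hLe : ∀ᶠ n : ℕ in atTop, Real.log n ≤ n * (p n * psf (K n) (P n)) := by
    filter_upwards [hβtop.eventually_ge_atTop 0, hlog.eventually_ge_atTop 1] with n h1 h2
    rw [hnE]
    have : 0 ≤ ℓ * Real.log (Real.log n) := mul_nonneg (Nat.cast_nonneg _) (Real.log_nonneg h2)
    linarith
  have heL : ∀ᶠ n : ℕ in atTop, n * (p n * psf (K n) (P n)) ≤ 2 * Real.log n := by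
    have h1 : ∀ᶠ n : ℕ in atTop, ℓ * Real.log (Real.log n) ≤ 1 / 2 * Real.log n := by
      filter_upwards [hlog.eventually ((Real.isLittleO_log_id_atTop.const_mul_left (ℓ : ℝ)).bound
        (by norm_num : (0 : ℝ) < 1 / 2)), hlog.eventually_ge_atTop 0] with n h h0
      rw [id, Real.norm_of_nonneg h0] at h
      exact (le_abs_self _).trans h
    filter_upwards [h1, hβo.eventually_le_const (by norm_num : (0 : ℝ) < 1 / 2),
      hlog.eventually_gt_atTop 0] with n h1 h2 h3
    rw [div_le_iff₀ h3] at h2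
    rw [hnE]
    linarith
  have he0 : ∀ n, 0 ≤ p n * psf (K n) (P n) :=
    fun n => mul_nonneg (hp0 n).le (psf_nonneg (hKP n))
  have he : Tendsto (fun n => p n * psf (K n) (P n)) atTop (nhds 0) := by
    have h1 : Tendsto (fun n : ℕ => 2 * (Real.log n / n)) atTop (nhds 0) := by
      simpa using ((Real.isLittleO_log_id_atTop.tendsto_div_nhds_zero).comp
        tendsto_natCast_atTop_atTop).const_mul 2
    refine squeeze_zero' (.of_forall he0) ?_ h1
    filter_upwards [heL, eventually_gt_atTop 0] with n h h0
    have h0' : (0 : ℝ) < n := by exact_mod_cast h0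
    rw [← mul_div_assoc, le_div_iff₀ h0']
    linarith
  have hsmall : ∀ᶠ n in atTop, 2 * (p n * psf (K n) (P n)) < 1 - Real.exp (-(ε / 6)) := by
    refine Tendsto.eventually_lt_const ?_ (he.const_mul 2)
    simpa using hε0
  have heR : ∀ᶠ n in atTop, p n * psf (K n) (P n) * (R + ℓ) ≤ 1 / 2 := by
    refine Tendsto.eventually_le_const ?_ (he.mul_const ((R : ℝ) + ℓ))
    norm_num
  have h2KP : ∀ᶠ n in atTop, 2 * K n ≤ P n := by
    filter_upwards [hKPo.eventually_le_const (by norm_num : (0 : ℝ) < 1 / 2), hK2] with n h1 h2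
    have hP0 : (0 : ℝ) < P n := by exact_mod_cast (by have := hKP n; omega : 0 < P n)
    rw [div_le_iff₀ hP0] at h1
    have : (2 : ℝ) * K n ≤ P n := by linarith
    exact_mod_cast this
  have hKL : ∀ᶠ n : ℕ in atTop, √σ * √(Real.log n) ≤ K n := by
    filter_upwards [hLe, hP, hK2] with n h1 h2 h3
    rw [← Real.sqrt_mul hσ.le]
    exact Real.sqrt_le_iff.2 ⟨Nat.cast_nonneg _, mul_log_le_keyRing_sq (hp1 n).le hσ
      (by omega) (hKP n) h2 h1⟩
  have hmuK : ∀ᶠ n in atTop, 2 ≤ mu * K n := by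
    have h := ((Real.tendsto_sqrt_atTop.comp hlog).const_mul_atTop
      (mul_pos hmu0 (Real.sqrt_pos.2 hσ))).eventually_ge_atTop 2
    filter_upwards [h, hKL] with n h1 h2
    refine h1.trans ?_
    rw [mul_assoc]
    exact mul_le_mul_of_nonneg_left h2 hmu0.le
  have hL8 : ∀ᶠ n : ℕ in atTop, 8 ≤ lam * σ * mu * (n * (p n * psf (K n) (P n))) := by
    have hpos : 0 < lam * σ * mu := by positivity
    filter_upwards [(hlog.const_mul_atTop hpos).eventually_ge_atTop 8, hLe] with n h1 h2
    exact h1.trans (mul_le_mul_of_nonneg_left h2 hpos.le)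
  have hAL : ∀ᶠ n : ℕ in atTop,
      Real.log (2 * Real.exp 1 * 2 ^ ℓ * Real.log n) ≤ lam / 96 * Real.log n := by
    filter_upwards [hlog.eventually (eventually_log_mul_add_le_mul_sqrt 0 hC
      (by positivity : 0 < lam / 96)), hlog.eventually_ge_atTop 1] with n h1 h2
    have h3 : √(Real.log n) ≤ Real.log n :=
      Real.sqrt_le_iff.2 ⟨by linarith, by nlinarith⟩
    rw [add_zero] at h1
    exact h1.trans (mul_le_mul_of_nonneg_left h3 (by positivity))
  have hAK : ∀ᶠ n : ℕ in atTop,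
      Real.log (2 * Real.exp 1 * 2 ^ ℓ * Real.log n) + 3 ≤ mu / 2 * K n / 3 := by
    have hc : 0 < mu / 6 * √σ := mul_pos (by positivity) (Real.sqrt_pos.2 hσ)
    filter_upwards [hlog.eventually (eventually_log_mul_add_le_mul_sqrt 3 hC hc), hKL] with n h1 h2
    refine h1.trans ?_
    rw [mul_assoc]
    linarith [mul_le_mul_of_nonneg_left h2 (by positivity : 0 ≤ mu / 6)]
  have hreal := squeeze_zero' (.of_forall fun n => measureReal_nonneg (μ := gonMeasure n (K n) (P n)
    (p n)) (s := {ω | vertexConn (gonGraph ω) = ℓ} ∩ {ω | ℓ < minDeg (gonGraph ω)} ∩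
      (EJ n (K n) (P n) ε lam mu)ᶜ)) ?_ ((tendsto_const_mul_pow_mul_exp_neg ((R : ℝ) + 1)
        (2 * Real.exp 1 * 2 ^ ℓ) (R + ℓ) (half_pos hε0)).comp hlog)
  · simpa using ENNReal.tendsto_ofReal hreal
  · filter_upwards [hLe, heL, hsmall, heR, h2KP, hmuK, hL8, hAL, hAK, hP, hK2,
      hlog.eventually_ge_atTop 1, eventually_ge_atTop 4, eventually_ge_atTop (6 * ℓ)]
      with n hLe heL hsmall heR h2KP hmuK hL8 hAL hAK hP hK2 hL1 hn4 hn6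
    exact measureReal_conn_eq_le_of_bounds (hp0 n).le (hp1 n).le (by omega) h2KP hε0 hε1 hlam0
      (by linarith) hmu0 hP hn4 hn6 (Real.exp_log (by exact_mod_cast (by omega : 0 < n))).symm hL1
      hLe heL hsmall heR hℓR hlamR hmuK hL8 hAL hAK
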